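/- arXiv:1109.5135 — 4 statements merged into one kernel-verified Lean document; each statement's English description precedes it below -/
import Mathlib

section
/- Let H be a fixed simple graph on k ≥ 3 vertices with m edges and minimum degree d ≥ 1, and set t = max{ (k² - 2(m+1))/(k(k+1)(m+1)), (2k - d - 3)/(k(d+1)(m-d+2)) }. There is a constant c > 0 depending only on H such that for every n ≥ 1 there exists a learning graph for the subgraph-detection function f_{H,n} whose complexity is at most c · n^{2 - 2/k - t}. -/
/-!
Learning graphs (Belovs) and the subgraph-detection function.
-/

/-- A learning graph for a function `f` with domain `D ⊆ {0,1}^ι`. -/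
structure LearningGraph {ι : Type} [Fintype ι] [DecidableEq ι]
    (D : Set (ι → Bool)) (f : (ι → Bool) → Bool) where
  /-- the vertex set -/
  V : Type
  [fintypeV : Fintype V]
  [decEqV : DecidableEq V]
  /-- the root -/
  root : V
  /-- the directed edge set -/
  E : Finset (V × V)
  /-- a topological ranking witnessing acyclicity -/
  rank : V → ℕ
  acyclic : ∀ e ∈ E, rank e.1 < rank e.2
  /-- the loaded variable indices at each vertex -/
  S : V → Finset ι
  S_root : S root = ∅
  S_mono : ∀ e ∈ E, S e.1 ⊆ S e.2
  /-- the weight function (only its values on `E` matter) -/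
  w : V × V → ℝ
  w_pos : ∀ e ∈ E, 0 < w e
  /-- the flows, one for each 1-input of `f` -/
  p : (ι → Bool) → V × V → ℝ
  /-- the net flow out of the root is 1 -/
  flow_root : ∀ y ∈ D, f y = true →
    ((∑ e ∈ E, if e.1 = root then p y e else 0)
      - ∑ e ∈ E, if e.2 = root then p y e else 0) = 1
  /-- at every non-root vertex, either the flow is conserved, or the vertex is a sink
  (strictly positive net incoming flow) and then its label is a 1-certificate for `y` -/
  flow_cons : ∀ y ∈ D, f y = true → ∀ v : V, v ≠ root →
    ((∑ e ∈ E, if e.2 = v then p y e else 0)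
        - ∑ e ∈ E, if e.1 = v then p y e else 0) = 0 ∨
      (0 < ((∑ e ∈ E, if e.2 = v then p y e else 0)
        - ∑ e ∈ E, if e.1 = v then p y e else 0) ∧
        ∀ z ∈ D, (∀ i ∈ S v, z i = y i) → f z = true)

attribute [instance] LearningGraph.fintypeV LearningGraph.decEqV

namespace LearningGraph

variable {ι : Type} [Fintype ι] [DecidableEq ι] {D : Set (ι → Bool)}
  {f : (ι → Bool) → Bool}

/-- The length of a learning graph edge. -/
def len (G : LearningGraph D f) (e : G.V × G.V) : ℕ :=
  (G.S e.2 \ G.S e.1).card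

/-- The negative complexity `C₀`. -/
noncomputable def C0 (G : LearningGraph D f) : ℝ :=
  ∑ e ∈ G.E, (G.len e : ℝ) * G.w e

/-- The positive complexity `C₁`: the maximum over 1-inputs `y`. -/
noncomputable def C1 (G : LearningGraph D f) : ℝ :=
  ⨆ y : {y : ι → Bool // y ∈ D ∧ f y = true},
    ∑ e ∈ G.E, (G.len e : ℝ) * (G.p y.1 e) ^ 2 / G.w e

/-- The complexity of a learning graph. -/
noncomputable def complexity (G : LearningGraph D f) : ℝ :=
  Real.sqrt (G.C0 * G.C1)

end LearningGraph

/-- The edge slots of an `n`-vertex graph: the `C(n,2)` unordered pairs,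
represented by ordered pairs with increasing entries. -/
abbrev EdgeSlot (n : ℕ) := {q : Fin n × Fin n // q.1 < q.2}

/-- `x : EdgeSlot n → Bool` contains a copy of `H` as a (not necessarily induced) subgraph. -/
def HasHCopy {k n : ℕ} (H : SimpleGraph (Fin k)) (x : EdgeSlot n → Bool) : Prop :=
  ∃ φ : Fin k ↪ Fin n, ∀ i j : Fin k, H.Adj i j →
    ∀ q : EdgeSlot n,
      ((q.1.1 = φ i ∧ q.1.2 = φ j) ∨ (q.1.1 = φ j ∧ q.1.2 = φ i)) → x q = true

open Classical in
/-- The subgraph-detection function `f_{H,n}`. -/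
noncomputable def subgraphFn {k : ℕ} (H : SimpleGraph (Fin k)) (n : ℕ) :
    (EdgeSlot n → Bool) → Bool :=
  fun x => if HasHCopy H x then true else false

/-
Every item of `H` (a vertex or an edge) receives a list of candidate values in a random seed, and
one entry of each list is hidden. The learning graph first loads whatever is determined by the
visible entries, and then reveals the hidden entries one item at a time. On an input containing a
copy of `H`, the flow is uniform over the seeds whose hidden entries spell that copy, and whose
lists show it nowhere else. Such seeds are determined by any edge they traverse, so the flow never
concentrates; the cost of a stage is the number of slots it loads times the square root of the
ratio between all hiding choices and those on which the flow lives. With lists of length `n ^ s`,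
this leaves a linear optimisation over the exponents. The first term of the maximum comes from
giving all vertices equally long lists and all edges equally long lists; the second from reading a
vertex of minimum degree last.
-/

lemma mul_sqrt_div {A B : ℝ} (hA : 0 < A) : A * √(B / A) = √(A * B) := by
  rw [← mul_div_cancel_right₀ (A * B) hA.ne', mul_assoc, mul_comm B A, ← mul_assoc, mul_div_assoc,
    Real.sqrt_mul (mul_self_nonneg A), Real.sqrt_mul_self hA.le]

lemma div_sqrt_div {A B : ℝ} (hA : 0 < A) (hB : 0 < B) : B / √(B / A) = √(A * B) := by
  rw [div_eq_iff (Real.sqrt_pos.2 (div_pos hB hA)).ne', ← mul_sqrt_div hA, mul_assoc,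
    Real.mul_self_sqrt (div_pos hB hA).le, mul_div_cancel₀ _ hA.ne']

lemma LearningGraph.complexity_le {ι : Type} [Fintype ι] [DecidableEq ι] {D : Set (ι → Bool)}
    {f : (ι → Bool) → Bool} (G : LearningGraph D f) {s : ℝ} (h₀ : G.C0 ≤ s) (h₁ : G.C1 ≤ s) :
    G.complexity ≤ s := by
  have hC0 : 0 ≤ G.C0 := Finset.sum_nonneg fun e he =>
    mul_nonneg (Nat.cast_nonneg _) (G.w_pos e he).le
  have hC1 : 0 ≤ G.C1 := Real.iSup_nonneg fun y => Finset.sum_nonneg fun e he =>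
    div_nonneg (by positivity) (G.w_pos e he).le
  have hs : 0 ≤ s := hC0.trans h₀
  exact Real.sqrt_le_iff.2 ⟨hs, (mul_le_mul h₀ h₁ hC1 hs).trans_eq (sq s).symm⟩

/-- Walks through `N + 1` layers driven by a seed `ω : Ω`: on layer `a` the walk of `ω` is in
`state a ω`. Vertices of the resulting learning graph are pairs of a layer and a state, so edges
between different pairs of layers never coincide. -/
structure LayeredWalk (ι σ Ω : Type) (N : ℕ) where
  state : Fin (N + 1) → Ω → σ
  label : σ → Finset ι
  start : σ
  state_zero : ∀ ω, state 0 ω = start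
  label_start : label start = ∅
  label_mono : ∀ (a : Fin N) ω, label (state a.castSucc ω) ⊆ label (state a.succ ω)

namespace LayeredWalk

open Finset

variable {ι σ Ω : Type} {N : ℕ} (P : LayeredWalk ι σ Ω N)

/-- The vertex visited on layer `a` by the walk of seed `ω`. -/
def node (a : Fin (N + 1)) (ω : Ω) : Fin (N + 1) × σ := (a, P.state a ω)

/-- The edge from layer `a` to layer `a + 1` used by the walk of seed `ω`. -/
def edge (a : Fin N) (ω : Ω) : (Fin (N + 1) × σ) × (Fin (N + 1) × σ) :=
  (P.node a.castSucc ω, P.node a.succ ω)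

variable [DecidableEq σ]

/-- The flow sending `1 / #Y` along the walk of every seed in `Y`. -/
noncomputable def flow (Y : Finset Ω) (e : (Fin (N + 1) × σ) × (Fin (N + 1) × σ)) : ℝ :=
  (∑ a, (#{ω ∈ Y | P.edge a ω = e} : ℝ)) / #Y

/-- The number of variables loaded on an edge. -/
def len [DecidableEq ι] (e : (Fin (N + 1) × σ) × (Fin (N + 1) × σ)) : ℕ :=
  #(P.label e.2.2 \ P.label e.1.2)

lemma flow_eq_of_layer (Y : Finset Ω) (a : Fin N)
    {e : (Fin (N + 1) × σ) × (Fin (N + 1) × σ)} (he : e.1.1 = a.castSucc) :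
    P.flow Y e = #{ω ∈ Y | P.edge a ω = e} / #Y := by
  rw [flow, sum_eq_single a _ (by simp)]
  intro b _ hba
  rw [Nat.cast_eq_zero, card_eq_zero, filter_eq_empty_iff]
  rintro ω - rfl
  exact hba (Fin.castSucc_injective _ he)

variable [Fintype Ω]

/-- The edges between layers `a` and `a + 1` used by some walk. -/
def layer (a : Fin N) : Finset ((Fin (N + 1) × σ) × (Fin (N + 1) × σ)) :=
  univ.image (P.edge a)

/-- All edges used by some walk. -/
def edges : Finset ((Fin (N + 1) × σ) × (Fin (N + 1) × σ)) :=
  univ.biUnion P.layer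

lemma fst_layer {a : Fin N} {e : (Fin (N + 1) × σ) × (Fin (N + 1) × σ)} (he : e ∈ P.layer a) :
    e.1.1 = a.castSucc := by
  obtain ⟨ω, -, rfl⟩ := mem_image.1 he
  rfl

lemma edge_mem_layer (a : Fin N) (ω : Ω) : P.edge a ω ∈ P.layer a :=
  mem_image_of_mem _ (mem_univ ω)

lemma edge_mem_edges (a : Fin N) (ω : Ω) : P.edge a ω ∈ P.edges :=
  mem_biUnion.2 ⟨a, mem_univ a, P.edge_mem_layer a ω⟩

lemma exists_edge_eq {e : (Fin (N + 1) × σ) × (Fin (N + 1) × σ)} (he : e ∈ P.edges) :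
    ∃ a ω, P.edge a ω = e := by
  simpa [edges, layer] using he

lemma sum_edges (F : (Fin (N + 1) × σ) × (Fin (N + 1) × σ) → ℝ) :
    ∑ e ∈ P.edges, F e = ∑ a, ∑ e ∈ P.layer a, F e := by
  refine sum_biUnion fun a _ b _ hab => disjoint_left.2 fun e ha hb => hab ?_
  exact Fin.castSucc_injective _ ((P.fst_layer ha).symm.trans (P.fst_layer hb))

lemma sum_flow (Y : Finset Ω) (p : (Fin (N + 1) × σ) × (Fin (N + 1) × σ) → Prop)
    [DecidablePred p] :
    ∑ e ∈ P.edges, (if p e then P.flow Y e else 0) =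
      (∑ ω ∈ Y, ∑ a, if p (P.edge a ω) then 1 else 0) / #Y := by
  have hedge : ∀ e, (if p e then P.flow Y e else 0) =
      (∑ ω ∈ Y, ∑ a, if P.edge a ω = e then (if p e then 1 else 0) else 0) / #Y := by
    intro e
    split_ifs with h
    · rw [flow, sum_comm (s := Y)]
      simp only [card_filter, Nat.cast_sum, Nat.cast_ite, Nat.cast_one, Nat.cast_zero]
    · simp
  simp_rw [hedge, ← sum_div]
  rw [sum_comm]
  simp_rw [sum_comm (s := P.edges), sum_ite_eq, P.edge_mem_edges, if_true]

lemma inflow_sub_outflow {Y : Finset Ω} (hY : Y.Nonempty) (v : Fin (N + 1) × σ) :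
    (∑ e ∈ P.edges, if e.2 = v then P.flow Y e else 0) -
        ∑ e ∈ P.edges, (if e.1 = v then P.flow Y e else 0) =
      #{ω ∈ Y | P.node (Fin.last N) ω = v} / #Y - if (0, P.start) = v then 1 else 0 := by
  have htelescope : ∀ ω, (∑ a, if (P.edge a ω).2 = v then (1 : ℝ) else 0) -
      (∑ a, if (P.edge a ω).1 = v then 1 else 0) =
        (if P.node (Fin.last N) ω = v then 1 else 0) - if (0, P.start) = v then 1 else 0 := by
    intro ω
    have hstart : P.node 0 ω = (0, P.start) := by rw [node, P.state_zero]
    rw [← hstart, sub_eq_sub_iff_add_eq_add, add_comm]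
    exact (Fin.sum_univ_succ fun i => if P.node i ω = v then (1 : ℝ) else 0).symm.trans
      ((Fin.sum_univ_castSucc _).trans (add_comm _ _))
  have hcard : (#Y : ℝ) ≠ 0 := by exact_mod_cast hY.card_pos.ne'
  rw [P.sum_flow Y fun e => e.2 = v, P.sum_flow Y fun e => e.1 = v, ← sub_div,
    ← sum_sub_distrib, sum_congr rfl fun ω _ => htelescope ω, sum_sub_distrib, sum_const,
    nsmul_eq_mul, sub_div, mul_div_cancel_left₀ _ hcard, card_filter]
  push_cast
  rfl

section Graph

variable [Fintype ι] [DecidableEq ι] [Fintype σ]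
  {D : Set (ι → Bool)} {f : (ι → Bool) → Bool}

/-- The learning graph formed by all walks, with one weight per layer; the flow of a 1-input `y`
is spread evenly over the walks with seed in `Y y`. -/
noncomputable def toLearningGraph (hN : 0 < N) (weight : Fin (N + 1) → ℝ)
    (hweight : ∀ i, 0 < weight i) (Y : (ι → Bool) → Finset Ω)
    (hY : ∀ y ∈ D, f y = true → (Y y).Nonempty)
    (hcert : ∀ y ∈ D, f y = true → ∀ ω ∈ Y y, ∀ z ∈ D,
      (∀ i ∈ P.label (P.state (Fin.last N) ω), z i = y i) → f z = true) :
    LearningGraph D f where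
  V := Fin (N + 1) × σ
  root := (0, P.start)
  E := P.edges
  rank v := v.1
  acyclic e he := by
    obtain ⟨a, ω, rfl⟩ := P.exists_edge_eq he
    exact Nat.lt_succ_self a
  S v := P.label v.2
  S_root := P.label_start
  S_mono e he := by
    obtain ⟨a, ω, rfl⟩ := P.exists_edge_eq he
    exact P.label_mono a ω
  w e := weight e.1.1
  w_pos e _ := hweight e.1.1
  p y := P.flow (Y y)
  flow_root y hyD hy := by
    have hlast : ∀ ω, P.node (Fin.last N) ω ≠ (0, P.start) := fun ω h =>
      hN.ne' (congrArg (fun v : Fin (N + 1) × σ => v.1.val) h)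
    have hnet := P.inflow_sub_outflow (hY y hyD hy) (0, P.start)
    rw [filter_false_of_mem fun ω _ => hlast ω, card_empty, Nat.cast_zero, zero_div,
      if_pos rfl] at hnet
    linarith
  flow_cons y hyD hy v hv := by
    rw [P.inflow_sub_outflow (hY y hyD hy) v, if_neg hv.symm, sub_zero]
    rcases ({ω ∈ Y y | P.node (Fin.last N) ω = v}).eq_empty_or_nonempty with h | h
    · left
      rw [h, card_empty, Nat.cast_zero, zero_div]
    · right
      refine ⟨div_pos (Nat.cast_pos.2 h.card_pos) (Nat.cast_pos.2 (hY y hyD hy).card_pos), ?_⟩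
      obtain ⟨ω, hω⟩ := h
      obtain ⟨hωY, rfl⟩ := mem_filter.1 hω
      exact hcert y hyD hy ω hωY

end Graph

variable [DecidableEq ι]

lemma mul_sum_layer_le (a : Fin N) (κ : ℝ)
    (hκ : ∀ ω, κ ≤ #{ω' | P.edge a ω' = P.edge a ω}) :
    κ * ∑ e ∈ P.layer a, (P.len e : ℝ) ≤ ∑ ω, (P.len (P.edge a ω) : ℝ) := by
  have hfiber := sum_fiberwise_of_maps_to (s := univ) (fun ω _ => P.edge_mem_layer a ω)
    fun ω => (P.len (P.edge a ω) : ℝ)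
  rw [← hfiber, mul_sum]
  refine sum_le_sum fun e he => ?_
  have hconst : ∀ ω ∈ univ.filter (fun ω => P.edge a ω = e),
      (P.len (P.edge a ω) : ℝ) = P.len e := by
    intro ω hω
    rw [(mem_filter.1 hω).2]
  obtain ⟨ω, -, rfl⟩ := mem_image.1 he
  rw [sum_congr rfl hconst, sum_const, nsmul_eq_mul]
  exact mul_le_mul_of_nonneg_right (hκ ω) (Nat.cast_nonneg _)

/-- Distinct seeds of `Y` use distinct edges, so each edge carries flow `0` or `1 / #Y`. -/
lemma sum_layer_mul_flow_sq (a : Fin N) {Y : Finset Ω} (hinj : Set.InjOn (P.edge a) Y) :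
    ∑ e ∈ P.layer a, (P.len e : ℝ) * P.flow Y e ^ 2 =
      (∑ ω ∈ Y, (P.len (P.edge a ω) : ℝ)) / (#Y : ℝ) ^ 2 := by
  have hsub : Y.image (P.edge a) ⊆ P.layer a := image_subset_image (subset_univ Y)
  rw [← sum_subset hsub, sum_image hinj, sum_div]
  · refine sum_congr rfl fun ω hω => ?_
    have hone : #{ω' ∈ Y | P.edge a ω' = P.edge a ω} = 1 :=
      card_eq_one.2 ⟨ω, by
        ext ω'
        rw [mem_filter, mem_singleton]
        exact ⟨fun h => hinj h.1 hω h.2, fun h => ⟨h ▸ hω, h ▸ rfl⟩⟩⟩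
    rw [P.flow_eq_of_layer Y a rfl, hone, Nat.cast_one, one_div, inv_pow, ← div_eq_mul_inv]
  · intro e he hne
    have hzero : #{ω ∈ Y | P.edge a ω = e} = 0 :=
      card_eq_zero.2 (filter_eq_empty_iff.2 fun ω hω h => hne (mem_image.2 ⟨ω, hω, h⟩))
    rw [P.flow_eq_of_layer Y a (P.fst_layer he), hzero]
    simp

/-- Giving layer `a` the weight `√(B a / A a)` balances its contributions to `C₀` and `C₁`. -/
theorem exists_learningGraph [Fintype ι] [Finite σ] {D : Set (ι → Bool)}
    {f : (ι → Bool) → Bool} (hN : 0 < N) (Y : (ι → Bool) → Finset Ω)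
    (hY : ∀ y ∈ D, f y = true → (Y y).Nonempty)
    (hcert : ∀ y ∈ D, f y = true → ∀ ω ∈ Y y, ∀ z ∈ D,
      (∀ i ∈ P.label (P.state (Fin.last N) ω), z i = y i) → f z = true)
    {A B : Fin N → ℝ} (hA : ∀ a, 0 < A a) (hB : ∀ a, 0 < B a)
    (hlayer : ∀ a, ∑ e ∈ P.layer a, (P.len e : ℝ) ≤ A a)
    (hflow : ∀ y ∈ D, f y = true → ∀ a,
      ∑ e ∈ P.layer a, (P.len e : ℝ) * P.flow (Y y) e ^ 2 ≤ B a) :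
    ∃ G : LearningGraph D f, G.complexity ≤ ∑ a, √(A a * B a) := by
  have := Fintype.ofFinite σ
  let w : Fin (N + 1) → ℝ := Fin.lastCases 1 fun a => √(B a / A a)
  have hpos : ∀ a, 0 < √(B a / A a) := fun a => Real.sqrt_pos.2 (div_pos (hB a) (hA a))
  have hwpos : ∀ i, 0 < w i := Fin.lastCases (by simp [w]) (by simpa [w] using hpos)
  have hw : ∀ {a e}, e ∈ P.layer a → w e.1.1 = √(B a / A a) := fun he => by
    rw [P.fst_layer he]
    exact Fin.lastCases_castSucc ..
  let G := P.toLearningGraph hN w hwpos Y hY hcert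
  refine ⟨G, G.complexity_le ?_ ?_⟩
  · refine (P.sum_edges _).trans_le (sum_le_sum fun a _ => ?_)
    calc _ = (∑ e ∈ P.layer a, (P.len e : ℝ)) * √(B a / A a) := by
          rw [sum_mul]
          exact sum_congr rfl fun e he => congrArg _ (hw he)
      _ ≤ A a * √(B a / A a) := mul_le_mul_of_nonneg_right (hlayer a) (hpos a).le
      _ = √(A a * B a) := mul_sqrt_div (hA a)
  · refine Real.iSup_le (fun y => ?_) (sum_nonneg fun a _ => Real.sqrt_nonneg _)
    refine (P.sum_edges _).trans_le (sum_le_sum fun a _ => ?_)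
    calc _ = (∑ e ∈ P.layer a, (P.len e : ℝ) * P.flow (Y y.1) e ^ 2) / √(B a / A a) := by
          rw [sum_div]
          exact sum_congr rfl fun e he => congrArg _ (hw he)
      _ ≤ B a / √(B a / A a) :=
          div_le_div_of_nonneg_right (hflow y.1 y.2.1 y.2.2 a) (hpos a).le
      _ = √(A a * B a) := div_sqrt_div (hA a) (hB a)

end LayeredWalk

lemma succ_pow_le_exp_one_mul_pow {M s : ℕ} (hs : s ≤ M) :
    ((M : ℝ) + 1) ^ s ≤ Real.exp 1 * (M : ℝ) ^ s := by
  rcases Nat.eq_zero_or_pos M with rfl | hM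
  · obtain rfl := Nat.le_zero.1 hs
    simp
  have hM' : (0 : ℝ) < M := by exact_mod_cast hM
  calc ((M : ℝ) + 1) ^ s = (1 + 1 / (M : ℝ)) ^ s * (M : ℝ) ^ s := by
        rw [← mul_pow, add_mul, one_mul, one_div_mul_cancel hM'.ne']
    _ ≤ Real.exp (1 / (M : ℝ)) ^ s * (M : ℝ) ^ s := by
        gcongr
        linarith [Real.add_one_le_exp (1 / (M : ℝ))]
    _ = Real.exp (s / M) * (M : ℝ) ^ s := by rw [← Real.exp_nat_mul, mul_one_div]
    _ ≤ Real.exp 1 * (M : ℝ) ^ s := by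
        gcongr
        exact div_le_one_of_le₀ (by exact_mod_cast hs) hM'.le

/-- A hidden position `ω.1 z` in the list of every item `z : I`, together with the lists
themselves: the list of `z` has positions `ρ z` and entries in `α z`. All lists are stored as one
function on the type of all positions. -/
abbrev HiddenLists {I : Type} (ρ α : I → Type) :=
  (∀ z, ρ z) × (∀ p : Σ z, ρ z, α p.1)

namespace HiddenLists

open Finset

variable {I : Type} {ρ α : I → Type}

/-- The items among the first `b` in the order `ord`. -/
def before [Fintype I] {T : ℕ} (ord : I ≃ Fin T) (b : ℕ) : Finset I := {z | (ord z : ℕ) < b}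

lemma mem_before [Fintype I] {T : ℕ} {ord : I ≃ Fin T} {b : ℕ} {z : I} :
    z ∈ before ord b ↔ (ord z : ℕ) < b :=
  mem_filter_univ z

lemma before_mono [Fintype I] {T : ℕ} (ord : I ≃ Fin T) : Monotone (before ord) :=
  fun _ _ hb _ hz => mem_before.2 ((mem_before.1 hz).trans_le hb)

lemma before_succ [Fintype I] [DecidableEq I] {T : ℕ} (ord : I ≃ Fin T) (z : I) :
    before ord (ord z + 1 : ℕ) = insert z (before ord (ord z)) := by
  ext g
  rw [mem_insert, mem_before, mem_before, Nat.lt_succ_iff_lt_or_eq,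
    or_comm, ← Fin.ext_iff, ord.apply_eq_iff_eq]

lemma prod_before_succ_div [Fintype I] {T : ℕ} (ord : I ≃ Fin T) (z : I) (a r : I → ℝ) :
    (∏ g ∈ before ord (ord z + 1 : ℕ), a g) / ∏ g ∈ before ord (ord z), r g =
      (∏ g ∈ before ord (ord z), a g / r g) * a z := by
  classical
  have hz : z ∉ before ord (ord z) := by rw [mem_before]; exact lt_irrefl _
  rw [before_succ, prod_insert hz, prod_div_distrib, div_mul_eq_mul_div, mul_comm]

variable (ρ α) in
/-- The number of seeds with prescribed hidden entries. -/
def seedsPerTarget [Fintype I] [∀ z, Fintype (ρ z)] [∀ z, Fintype (α z)] : ℝ :=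
  (∏ z, (Fintype.card (ρ z) : ℝ)) * ∏ z, (Fintype.card (α z) : ℝ) ^ (Fintype.card (ρ z) - 1)

lemma seedsPerTarget_pos [Fintype I] [∀ z, Fintype (ρ z)] [∀ z, Fintype (α z)] [∀ z, Nonempty (ρ z)]
    [∀ z, Nonempty (α z)] : 0 < seedsPerTarget ρ α :=
  mul_pos (prod_pos fun _ _ => Nat.cast_pos.2 Fintype.card_pos)
    (prod_pos fun _ _ => pow_pos (Nat.cast_pos.2 Fintype.card_pos) _)

variable [∀ z, DecidableEq (ρ z)]

lemma prod_ite_hidden [Fintype I] [∀ z, Fintype (ρ z)] {R : Type} [CommMonoid R]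
    (h : ∀ z, ρ z) (a b : I → R) :
    ∏ p : Σ z, ρ z, (if p.2 = h p.1 then a p.1 else b p.1) =
      ∏ z, a z * b z ^ (Fintype.card (ρ z) - 1) := by
  rw [Fintype.prod_sigma]
  refine prod_congr rfl fun z _ => ?_
  have hother : ∏ i ∈ univ.erase (h z), (if i = h z then a z else b z) =
      b z ^ (Fintype.card (ρ z) - 1) := by
    rw [prod_congr rfl fun i hi => if_neg (ne_of_mem_erase hi), prod_const,
      card_erase_of_mem (mem_univ _), card_univ]
  rw [← mul_prod_erase univ _ (mem_univ (h z)), if_pos rfl, hother]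

variable [DecidableEq I]

/-- The part of the lists that is visible once the hidden entries of the items in `W` are read:
all entries except the hidden ones of items outside `W`. -/
def reveal (W : Finset I) (ω : HiddenLists ρ α) (p : Σ z, ρ z) : Option (α p.1) :=
  if p.1 ∈ W ∨ p.2 ≠ ω.1 p.1 then some (ω.2 p) else none

lemma reveal_eq_some_iff {W : Finset I} {ω : HiddenLists ρ α} {p : Σ z, ρ z} {x : α p.1} :
    reveal W ω p = some x ↔ (p.1 ∈ W ∨ p.2 ≠ ω.1 p.1) ∧ ω.2 p = x := by
  simp [reveal]

lemma reveal_insert_eq_some {W : Finset I} {z : I} {ω : HiddenLists ρ α} {p : Σ z, ρ z}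
    {x : α p.1} (h : reveal (insert z W) ω p = some x) :
    reveal W ω p = some x ∨ p.1 = z ∧ p.2 = ω.1 p.1 := by
  simp only [reveal_eq_some_iff, mem_insert] at h ⊢
  tauto

lemma reveal_eq_none_iff {W : Finset I} {ω : HiddenLists ρ α} {p : Σ z, ρ z} :
    reveal W ω p = none ↔ p.1 ∉ W ∧ p.2 = ω.1 p.1 := by
  simp [reveal]

lemma reveal_congr {W : Finset I} {ω ω' : HiddenLists ρ α} (h : ∀ z ∉ W, ω.1 z = ω'.1 z)
    (hX : ∀ p, p.1 ∈ W ∨ p.2 ≠ ω.1 p.1 → ω.2 p = ω'.2 p) : reveal W ω = reveal W ω' := by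
  ext1 p
  by_cases hp : p.1 ∈ W
  · rw [reveal, reveal, if_pos (.inl hp), if_pos (.inl hp), hX p (.inl hp)]
  · rw [reveal, reveal, ← h _ hp]
    split_ifs with hvis
    · rw [hX p hvis]
    · rfl

variable [Fintype I]

/-- What has been read of the lists: `none` at the entries not read yet. -/
abbrev View (ρ α : I → Type) := ∀ p : Σ z, ρ z, Option (α p.1)

lemma reveal_before_last {T : ℕ} (ord : I ≃ Fin T) (ω : HiddenLists ρ α) :
    reveal (before ord T) ω = fun p => some (ω.2 p) :=
  funext fun p => reveal_eq_some_iff.2 ⟨.inl (mem_before.2 (ord p.1).isLt), rfl⟩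

/-- Read all visible entries first, then the hidden entries in the order `ord`. The state `none`
is the root, where nothing has been read. -/
def walk {ι : Type} {T : ℕ} (ord : I ≃ Fin T) (label : View ρ α → Finset ι)
    (hmono : ∀ s s' : View ρ α, (∀ p x, s p = some x → s' p = some x) → label s ⊆ label s') :
    LayeredWalk ι (Option (View ρ α)) (HiddenLists ρ α) (T + 1) where
  state := Fin.cases (fun _ => none) fun b ω => some (reveal (before ord b) ω)
  label s := s.elim ∅ label
  start := none
  state_zero _ := rfl
  label_start := rfl
  label_mono a ω := by
    cases a using Fin.cases with
    | zero => exact empty_subset _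
    | succ b =>
      refine hmono _ _ fun p x hx => ?_
      rw [reveal_eq_some_iff] at hx ⊢
      exact hx.imp_left (Or.imp_left (@before_mono _ _ _ ord _ _ b.val.le_succ p.1))

lemma walk_edge_eq {ι : Type} {T : ℕ} (ord : I ≃ Fin T) (label : View ρ α → Finset ι)
    (hmono : ∀ s s' : View ρ α, (∀ p x, s p = some x → s' p = some x) → label s ⊆ label s')
    {a : Fin (T + 1)} {ω ω' : HiddenLists ρ α}
    (h : reveal (before ord ((a : ℕ) - 1)) ω' = reveal (before ord ((a : ℕ) - 1)) ω)
    (h' : reveal (before ord a) ω' = reveal (before ord a) ω) :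
    (walk ord label hmono).edge a ω' = (walk ord label hmono).edge a ω := by
  cases a using Fin.cases with
  | zero => exact Prod.ext rfl (Prod.ext rfl (congrArg some h'))
  | succ b => exact Prod.ext (Prod.ext rfl (congrArg some h)) (Prod.ext rfl (congrArg some h'))

variable [∀ z, Fintype (ρ z)]

/-- The lists whose entry for item `z` lies in `s z` at the position `h z` and in `t z` at all
other positions. -/
def box (h : ∀ z, ρ z) (s t : ∀ z, Finset (α z)) : Finset (∀ p : Σ z, ρ z, α p.1) :=
  Fintype.piFinset fun p => if p.2 = h p.1 then s p.1 else t p.1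

lemma mem_box {h : ∀ z, ρ z} {s t : ∀ z, Finset (α z)} {X : ∀ p : Σ z, ρ z, α p.1} :
    X ∈ box h s t ↔ ∀ p, (p.2 = h p.1 → X p ∈ s p.1) ∧ (p.2 ≠ h p.1 → X p ∈ t p.1) := by
  simp only [box, Fintype.mem_piFinset]
  refine forall_congr' fun p => ?_
  split_ifs with hp <;> simp [hp]

lemma card_box (h : ∀ z, ρ z) (s t : ∀ z, Finset (α z)) :
    #(box h s t) = ∏ z, #(s z) * #(t z) ^ (Fintype.card (ρ z) - 1) := by
  rw [box, Fintype.card_piFinset, ← prod_ite_hidden h]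
  exact prod_congr rfl fun p _ => apply_ite card _ _ _

lemma mul_prod_le_card_reveal_eq [∀ z, Fintype (α z)] [∀ z, DecidableEq (α z)] {W W' : Finset I}
    (hW : W ⊆ W') (ω : HiddenLists ρ α) :
    (∏ z ∈ W, Fintype.card (ρ z)) * ∏ z ∈ W'ᶜ, Fintype.card (α z) ≤
      #{ω' : HiddenLists ρ α | reveal W ω' = reveal W ω ∧ reveal W' ω' = reveal W' ω} := by
  let pos : Finset (∀ z, ρ z) := Fintype.piFinset fun z => if z ∈ W then univ else {ω.1 z}
  let lists : Finset (∀ p : Σ z, ρ z, α p.1) := Fintype.piFinset fun p =>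
    if p.2 = ω.1 p.1 ∧ p.1 ∈ W'ᶜ then univ else {ω.2 p}
  have hpos : #pos = ∏ z ∈ W, Fintype.card (ρ z) := by
    rw [Fintype.card_piFinset, ← Fintype.prod_ite_mem W]
    exact prod_congr rfl fun z _ => by split_ifs <;> simp
  have hlists : #lists = ∏ z ∈ W'ᶜ, Fintype.card (α z) := by
    have hcard : ∀ p : Σ z, ρ z, #(if p.2 = ω.1 p.1 ∧ p.1 ∈ W'ᶜ then univ else {ω.2 p}) =
        if p.2 = ω.1 p.1 then (if p.1 ∈ W'ᶜ then Fintype.card (α p.1) else 1) else 1 := by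
      intro p
      by_cases hp : p.2 = ω.1 p.1 <;> by_cases hW' : p.1 ∈ W'ᶜ <;> simp [hp, hW']
    rw [Fintype.card_piFinset, prod_congr rfl fun p _ => hcard p,
      prod_ite_hidden ω.1 (fun z => if z ∈ W'ᶜ then Fintype.card (α z) else 1) fun _ => 1]
    simp only [one_pow, mul_one, Fintype.prod_ite_mem]
  rw [← hpos, ← hlists, ← card_product]
  refine card_le_card fun ω' hω' => mem_filter.2 ⟨mem_univ _, ?_⟩
  rw [mem_product, Fintype.mem_piFinset, Fintype.mem_piFinset] at hω'
  have hh : ∀ z ∉ W, ω.1 z = ω'.1 z := fun z hz => by simpa [hz, eq_comm] using hω'.1 z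
  have hX : ∀ p, p.1 ∈ W' ∨ p.2 ≠ ω.1 p.1 → ω.2 p = ω'.2 p := fun p hp => by
    have hp' : ¬(p.2 = ω.1 p.1 ∧ p.1 ∈ W'ᶜ) := by simpa [or_iff_not_imp_right] using hp
    simpa only [if_neg hp', mem_singleton, eq_comm] using hω'.2 p
  exact ⟨(reveal_congr hh fun p hp => hX p (hp.imp_left (@hW _))).symm,
    (reveal_congr (fun z hz => hh z (mt (@hW _) hz)) hX).symm⟩

section Through

variable [∀ z, Fintype (α z)]

/-- The lists with entry `v z` at the hidden position of every item `z`. -/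
def through (h : ∀ z, ρ z) (v : ∀ z, α z) : Finset (∀ p : Σ z, ρ z, α p.1) :=
  box h (fun z => {v z}) fun _ => univ

lemma mem_through {h : ∀ z, ρ z} {v : ∀ z, α z} {X : ∀ p : Σ z, ρ z, α p.1} :
    X ∈ through h v ↔ (fun z => X ⟨z, h z⟩) = v := by
  simp only [through, mem_box, mem_singleton, mem_univ, implies_true, and_true, funext_iff]
  exact ⟨fun hX z => hX ⟨z, h z⟩ rfl, fun hX p hp => by
    obtain ⟨z, i⟩ := p
    obtain rfl : i = h z := hp
    exact hX z⟩

lemma card_through (h : ∀ z, ρ z) (v : ∀ z, α z) :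
    #(through h v) = ∏ z, Fintype.card (α z) ^ (Fintype.card (ρ z) - 1) := by
  simp only [through, card_box, card_singleton, one_mul, card_univ]

lemma sum_card_through (v : (∀ z, ρ z) → ∀ z, α z) :
    ∑ h, (#(through h (v h)) : ℝ) = seedsPerTarget ρ α := by
  simp only [card_through, Nat.cast_prod, Nat.cast_pow, sum_const, card_univ, Fintype.card_pi,
    nsmul_eq_mul, seedsPerTarget]

lemma sum_sum_through (h : ∀ z, ρ z) (F : (∀ p : Σ z, ρ z, α p.1) → ℝ) :
    ∑ v, ∑ X ∈ through h v, F X = ∑ X, F X := by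
  classical
  rw [← sum_fiberwise univ (fun X z => X ⟨z, h z⟩) F]
  refine sum_congr rfl fun v _ => sum_congr ?_ fun _ _ => rfl
  ext X
  rw [mem_through, mem_filter, and_iff_right (mem_univ X)]

lemma sum_univ_le_of_sum_through_le {c : ℝ} {F : HiddenLists ρ α → ℝ}
    (hF : ∀ h v, ∑ X ∈ through h v, F (h, X) ≤ c * #(through h v)) :
    ∑ ω, F ω ≤ c * seedsPerTarget ρ α * ∏ z, (Fintype.card (α z) : ℝ) := by
  calc ∑ ω, F ω = ∑ h, ∑ v, ∑ X ∈ through h v, F (h, X) := by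
        rw [Fintype.sum_prod_type]
        exact sum_congr rfl fun h _ => (sum_sum_through h _).symm
    _ ≤ ∑ h, ∑ v : ∀ z, α z, c * (#(through h v) : ℝ) :=
        sum_le_sum fun h _ => sum_le_sum fun v _ => hF h v
    _ = ∑ _v : ∀ z, α z, c * seedsPerTarget ρ α := by
        rw [sum_comm]
        exact sum_congr rfl fun v _ => by rw [← mul_sum, sum_card_through fun _ => v]
    _ = c * seedsPerTarget ρ α * ∏ z, (Fintype.card (α z) : ℝ) := by
        rw [sum_const, card_univ, Fintype.card_pi, nsmul_eq_mul, Nat.cast_prod, mul_comm]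

end Through

variable [∀ z, Fintype (α z)] [∀ z, DecidableEq (α z)]

lemma card_filter_through_mul {h : ∀ z, ρ z} (v : ∀ z, α z) {p : Σ z, ρ z} (hp : p.2 ≠ h p.1)
    (s : Finset (α p.1)) :
    #{X ∈ through h v | X p ∈ s} * Fintype.card (α p.1) = #(through h v) * #s := by
  let t : ∀ p : Σ z, ρ z, Finset (α p.1) := fun p => if p.2 = h p.1 then {v p.1} else univ
  have ht : t p = univ := if_neg hp
  have hfilter : {X ∈ through h v | X p ∈ s} = Fintype.piFinset (Function.update t p s) := by
    rw [Fintype.piFinset_update_eq_filter_piFinset_mem t p (ht ▸ subset_univ s)]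
    rfl
  have hupdate : ∀ q, #(Function.update t p s q) =
      Function.update (fun q => #(t q)) p #s q := fun q => by
    rcases eq_or_ne q p with rfl | hq <;> simp [*]
  have hthrough : #(through h v) = Fintype.card (α p.1) * ∏ q ∈ univ \ {p}, #(t q) := by
    rw [through, box, Fintype.card_piFinset, ← erase_eq, ← mul_prod_erase univ _ (mem_univ p),
      if_neg hp, card_univ]
  rw [hfilter, Fintype.card_piFinset, prod_congr rfl fun q _ => hupdate q,
    prod_update_of_mem (mem_univ p), hthrough]
  ring

/-- The lists in which `v z` occurs at the hidden position of `z` and nowhere else. -/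
def onlyThrough (h : ∀ z, ρ z) (v : ∀ z, α z) : Finset (∀ p : Σ z, ρ z, α p.1) :=
  box h (fun z => {v z}) fun z => {v z}ᶜ

lemma mem_onlyThrough {h : ∀ z, ρ z} {v : ∀ z, α z} {X : ∀ p : Σ z, ρ z, α p.1} :
    X ∈ onlyThrough h v ↔ ∀ p, X p = v p.1 ↔ p.2 = h p.1 := by
  simp only [onlyThrough, mem_box, mem_singleton, mem_compl]
  exact forall_congr' fun p => ⟨fun hX => ⟨not_imp_not.1 hX.2, hX.1⟩,
    fun hX => ⟨hX.2, mt hX.1⟩⟩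

lemma onlyThrough_subset_through (h : ∀ z, ρ z) (v : ∀ z, α z) :
    onlyThrough h v ⊆ through h v := fun _ hX =>
  mem_through.2 (funext fun z => (mem_onlyThrough.1 hX ⟨z, h z⟩).2 rfl)

/-- Avoiding the target at the visible positions costs only a constant factor, since the list of
`z` is not longer than the alphabet of `z`. -/
lemma card_through_le (hρα : ∀ z, Fintype.card (ρ z) ≤ Fintype.card (α z)) (h : ∀ z, ρ z)
    (v : ∀ z, α z) :
    (#(through h v) : ℝ) ≤ Real.exp (Fintype.card I) * #(onlyThrough h v) := by
  simp only [card_through, onlyThrough, card_box, card_singleton, one_mul, card_compl]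
  push_cast
  rw [← mul_one (Fintype.card I : ℝ), Real.exp_nat_mul, ← card_univ, ← prod_const,
    ← prod_mul_distrib]
  refine prod_le_prod (fun _ _ => by positivity) fun z _ => ?_
  have hz := Fintype.card_pos_iff.2 ⟨v z⟩
  have := succ_pow_le_exp_one_mul_pow (Nat.sub_le_sub_right (hρα z) 1)
  rwa [← Nat.cast_succ, Nat.succ_eq_add_one, Nat.sub_add_cancel hz] at this

/-- Seeds with the target at the hidden positions only, the target being computed from the hidden
positions. -/
def fair (τ : (∀ z, ρ z) → ∀ z, α z) : Finset (HiddenLists ρ α) :=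
  {ω | ω.2 ∈ onlyThrough ω.1 (τ ω.1)}

lemma mem_fair {τ : (∀ z, ρ z) → ∀ z, α z} {ω : HiddenLists ρ α} :
    ω ∈ fair τ ↔ ω.2 ∈ onlyThrough ω.1 (τ ω.1) := by
  rw [fair, mem_filter, and_iff_right (mem_univ ω)]

lemma sum_fair (τ : (∀ z, ρ z) → ∀ z, α z) (F : HiddenLists ρ α → ℝ) :
    ∑ ω ∈ fair τ, F ω = ∑ h, ∑ X ∈ onlyThrough h (τ h), F (h, X) :=
  sum_finset_product _ univ _ fun ω => by rw [mem_fair, and_iff_right (mem_univ ω.1)]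

lemma seedsPerTarget_le_exp_mul_card_fair
    (hρα : ∀ z, Fintype.card (ρ z) ≤ Fintype.card (α z)) (τ : (∀ z, ρ z) → ∀ z, α z) :
    seedsPerTarget ρ α ≤ Real.exp (Fintype.card I) * #(fair τ) := by
  have hfair : (#(fair τ) : ℝ) = ∑ h, (#(onlyThrough h (τ h)) : ℝ) := by
    simpa using sum_fair τ fun _ => 1
  rw [← sum_card_through τ, hfair, mul_sum]
  exact sum_le_sum fun h _ => card_through_le hρα h (τ h)

lemma fair_nonempty [∀ z, Nonempty (ρ z)] [∀ z, Nonempty (α z)]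
    (hρα : ∀ z, Fintype.card (ρ z) ≤ Fintype.card (α z)) (τ : (∀ z, ρ z) → ∀ z, α z) :
    (fair τ).Nonempty :=
  card_pos.1 (Nat.cast_pos.1 (pos_of_mul_pos_right
    (seedsPerTarget_pos.trans_le (seedsPerTarget_le_exp_mul_card_fair hρα τ)) (Real.exp_pos _).le))

lemma sum_fair_le_of_sum_through_le {c : ℝ} {F : HiddenLists ρ α → ℝ} (hF₀ : ∀ ω, 0 ≤ F ω)
    (hF : ∀ h v, ∑ X ∈ through h v, F (h, X) ≤ c * #(through h v))
    (τ : (∀ z, ρ z) → ∀ z, α z) :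
    ∑ ω ∈ fair τ, F ω ≤ c * seedsPerTarget ρ α := by
  calc ∑ ω ∈ fair τ, F ω = ∑ h, ∑ X ∈ onlyThrough h (τ h), F (h, X) := sum_fair τ F
    _ ≤ ∑ h, ∑ X ∈ through h (τ h), F (h, X) := sum_le_sum fun h _ =>
        sum_le_sum_of_subset_of_nonneg (onlyThrough_subset_through h _) fun X _ _ => hF₀ _
    _ ≤ ∑ h, c * (#(through h (τ h)) : ℝ) := sum_le_sum fun h _ => hF h _
    _ = c * seedsPerTarget ρ α := by rw [← mul_sum, sum_card_through]

/-- The target of `z` depends only on the hidden positions of earlier items, so these positions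
can be recovered one item at a time. -/
lemma reveal_injOn_fair {T : ℕ} (ord : I ≃ Fin T) {τ : (∀ z, ρ z) → ∀ z, α z}
    (hτ : ∀ h h' z, (∀ g, ord g < ord z → h g = h' g) → τ h z = τ h' z) (W : Finset I) :
    Set.InjOn (reveal (ρ := ρ) (α := α) W) (fair τ) := by
  intro ω hω ω' hω' heq
  have hiff : ∀ p, ω.2 p = τ ω.1 p.1 ↔ p.2 = ω.1 p.1 := mem_onlyThrough.1 (mem_fair.1 hω)
  have hiff' : ∀ p, ω'.2 p = τ ω'.1 p.1 ↔ p.2 = ω'.1 p.1 := mem_onlyThrough.1 (mem_fair.1 hω')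
  have hpos : ∀ z, ω.1 z = ω'.1 z := by
    suffices ∀ b : ℕ, ∀ z, (ord z : ℕ) = b → ω.1 z = ω'.1 z from fun z => this _ z rfl
    intro b
    induction b using Nat.strong_induction_on with
    | _ b ih =>
      rintro z rfl
      have htarget : τ ω.1 z = τ ω'.1 z := hτ _ _ _ fun g hg => ih _ hg g rfl
      by_cases hz : z ∈ W
      · have hvis : reveal W ω' ⟨z, ω.1 z⟩ = some (τ ω.1 z) :=
          heq ▸ reveal_eq_some_iff.2 ⟨.inl hz, (hiff ⟨z, ω.1 z⟩).2 rfl⟩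
        exact (hiff' ⟨z, ω.1 z⟩).1 ((reveal_eq_some_iff.1 hvis).2.trans htarget)
      · have hnone : reveal W ω' ⟨z, ω.1 z⟩ = none := heq ▸ reveal_eq_none_iff.2 ⟨hz, rfl⟩
        exact (reveal_eq_none_iff.1 hnone).2
  have hpos' : ω.1 = ω'.1 := funext hpos
  refine Prod.ext hpos' (funext fun p => ?_)
  by_cases hp : p.2 = ω.1 p.1
  · rw [(hiff p).2 hp, (hiff' p).2 (hpos' ▸ hp), hpos']
  · have hvis : reveal W ω' p = some (ω.2 p) := heq ▸ reveal_eq_some_iff.2 ⟨.inr hp, rfl⟩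
    exact (reveal_eq_some_iff.1 hvis).2.symm

section Walk

variable {ι : Type} [DecidableEq ι] {T : ℕ} (ord : I ≃ Fin T) (label : View ρ α → Finset ι)
  (hmono : ∀ s s' : View ρ α, (∀ p x, s p = some x → s' p = some x) → label s ⊆ label s')

lemma sum_layer_len_le [∀ z, Nonempty (α z)] [∀ z, Nonempty (ρ z)] (a : Fin (T + 1)) {c : ℝ}
    (hload : ∀ h v, ∑ X ∈ through h v,
      ((walk ord label hmono).len ((walk ord label hmono).edge a (h, X)) : ℝ) ≤
        c * #(through h v)) :
    ∑ e ∈ (walk ord label hmono).layer a, ((walk ord label hmono).len e : ℝ) ≤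
      c * seedsPerTarget ρ α * ((∏ z ∈ before ord a, (Fintype.card (α z) : ℝ)) /
        ∏ z ∈ before ord ((a : ℕ) - 1), (Fintype.card (ρ z) : ℝ)) := by
  have hρ : 0 < ∏ z ∈ before ord ((a : ℕ) - 1), (Fintype.card (ρ z) : ℝ) :=
    prod_pos fun z _ => Nat.cast_pos.2 Fintype.card_pos
  have hα : 0 < ∏ z ∈ (before ord a)ᶜ, (Fintype.card (α z) : ℝ) :=
    prod_pos fun z _ => Nat.cast_pos.2 Fintype.card_pos
  have hsum := ((walk ord label hmono).mul_sum_layer_le a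
    ((∏ z ∈ before ord ((a : ℕ) - 1), (Fintype.card (ρ z) : ℝ)) *
      ∏ z ∈ (before ord a)ᶜ, (Fintype.card (α z) : ℝ)) fun ω => by
    rw [← Nat.cast_prod, ← Nat.cast_prod, ← Nat.cast_mul, Nat.cast_le]
    refine (mul_prod_le_card_reveal_eq (before_mono ord (Nat.sub_le a 1)) ω).trans
      (card_le_card fun ω' => ?_)
    simp only [mem_filter_univ]
    exact fun h => walk_edge_eq ord label hmono h.1 h.2).trans (sum_univ_le_of_sum_through_le hload)
  rw [← prod_mul_prod_compl (before ord a)] at hsum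
  rw [← mul_div_assoc, le_div_iff₀ hρ]
  refine le_of_mul_le_mul_right ?_ hα
  linarith

lemma sum_layer_len_mul_flow_sq_le [∀ z, Nonempty (ρ z)] [∀ z, Nonempty (α z)]
    (hρα : ∀ z, Fintype.card (ρ z) ≤ Fintype.card (α z)) {τ : (∀ z, ρ z) → ∀ z, α z}
    (hτ : ∀ h h' z, (∀ g, ord g < ord z → h g = h' g) → τ h z = τ h' z) (a : Fin (T + 1))
    {c : ℝ} (hc : 0 ≤ c)
    (hload : ∀ h v, ∑ X ∈ through h v,
      ((walk ord label hmono).len ((walk ord label hmono).edge a (h, X)) : ℝ) ≤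
        c * #(through h v)) :
    ∑ e ∈ (walk ord label hmono).layer a,
        ((walk ord label hmono).len e : ℝ) * (walk ord label hmono).flow (fair τ) e ^ 2 ≤
      c * Real.exp (Fintype.card I) ^ 2 / seedsPerTarget ρ α := by
  have hinj : Set.InjOn ((walk ord label hmono).edge a) (fair τ : Finset (HiddenLists ρ α)) :=
    fun ω hω ω' hω' heq => reveal_injOn_fair ord hτ (before ord a) hω hω'
      (Option.some.inj (congrArg (fun e => e.2.2) heq))
  rw [(walk ord label hmono).sum_layer_mul_flow_sq a hinj]
  have hvol := seedsPerTarget_pos (ρ := ρ) (α := α)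
  have hfair := seedsPerTarget_le_exp_mul_card_fair hρα τ
  have hY : (0 : ℝ) < #(fair τ) :=
    pos_of_mul_pos_right (hvol.trans_le hfair) (Real.exp_pos _).le
  have hsum := sum_fair_le_of_sum_through_le
    (F := fun ω => ((walk ord label hmono).len ((walk ord label hmono).edge a ω) : ℝ))
    (fun _ => Nat.cast_nonneg _) hload τ
  rw [div_le_div_iff₀ (by positivity) hvol]
  refine (mul_le_mul_of_nonneg_right hsum hvol.le).trans ?_
  rw [mul_assoc, mul_assoc, ← sq, ← mul_pow]
  gcongr

lemma sqrt_layerCost_mul {c v ratio : ℝ} (hc : 0 ≤ c) (hv : v ≠ 0) (x : ℝ) :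
    √(c * v * ratio * (c * Real.exp x ^ 2 / v)) = Real.exp x * (c * √ratio) := by
  rw [show c * v * ratio * (c * Real.exp x ^ 2 / v) = (Real.exp x * c) ^ 2 * ratio by
    field_simp, Real.sqrt_mul (sq_nonneg _), Real.sqrt_sq (by positivity), mul_assoc]

lemma exists_learningGraph_of_stage_load [Fintype ι] [∀ z, Nonempty (ρ z)] [∀ z, Nonempty (α z)]
    {D : Set (ι → Bool)} {f : (ι → Bool) → Bool}
    (hρα : ∀ z, Fintype.card (ρ z) ≤ Fintype.card (α z))
    (τ : (ι → Bool) → (∀ z, ρ z) → ∀ z, α z)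
    (hτ : ∀ y h h' z, (∀ g, ord g < ord z → h g = h' g) → τ y h z = τ y h' z)
    (hcert : ∀ y ∈ D, f y = true → ∀ ω ∈ fair (τ y), ∀ x ∈ D,
      (∀ i ∈ label (fun p => some (ω.2 p)), x i = y i) → f x = true)
    {c : Fin (T + 1) → ℝ} (hc : ∀ a, 0 < c a)
    (hload : ∀ a h v, ∑ X ∈ through h v,
      ((walk ord label hmono).len ((walk ord label hmono).edge a (h, X)) : ℝ) ≤
        c a * #(through h v)) :
    ∃ G : LearningGraph D f, G.complexity ≤ Real.exp (Fintype.card I) *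
      ∑ a : Fin (T + 1), c a * √((∏ z ∈ before ord a, (Fintype.card (α z) : ℝ)) /
        ∏ z ∈ before ord ((a : ℕ) - 1), (Fintype.card (ρ z) : ℝ)) := by
  have hvol := seedsPerTarget_pos (ρ := ρ) (α := α)
  have hratio : ∀ a : Fin (T + 1), 0 < (∏ z ∈ before ord a, (Fintype.card (α z) : ℝ)) /
      ∏ z ∈ before ord ((a : ℕ) - 1), (Fintype.card (ρ z) : ℝ) := fun a =>
    div_pos (prod_pos fun _ _ => Nat.cast_pos.2 Fintype.card_pos)
      (prod_pos fun _ _ => Nat.cast_pos.2 Fintype.card_pos)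
  obtain ⟨G, hG⟩ := (walk ord label hmono).exists_learningGraph T.succ_pos (fun y => fair (τ y))
    (fun y _ _ => fair_nonempty hρα (τ y))
    (fun y hyD hy ω hω => (reveal_before_last ord ω) ▸ hcert y hyD hy ω hω)
    (fun a => mul_pos (mul_pos (hc a) hvol) (hratio a))
    (fun a => div_pos (mul_pos (hc a) (pow_pos (Real.exp_pos _) 2)) hvol)
    (fun a => sum_layer_len_le ord label hmono a (hload a))
    (fun y _ _ a => sum_layer_len_mul_flow_sq_le ord label hmono hρα (hτ y) a (hc a).le (hload a))
  refine ⟨G, hG.trans_eq ?_⟩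
  simp only [sqrt_layerCost_mul (hc _).le hvol.ne', mul_sum]

end Walk

/-- Stage `0` loads everything visible, which costs at most `D₀`; each later stage reads the hidden
entry of one item `z`, loading `c z` variables on average over lists with prescribed hidden
entries. -/
theorem exists_learningGraph [∀ z, Nonempty (ρ z)] [∀ z, Nonempty (α z)] {ι : Type} [Fintype ι]
    [DecidableEq ι] {D : Set (ι → Bool)} {f : (ι → Bool) → Bool} {T : ℕ} (ord : I ≃ Fin T)
    (label : View ρ α → Finset ι)
    (hmono : ∀ s s' : View ρ α, (∀ p x, s p = some x → s' p = some x) → label s ⊆ label s')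
    (hρα : ∀ z, Fintype.card (ρ z) ≤ Fintype.card (α z))
    (τ : (ι → Bool) → (∀ z, ρ z) → ∀ z, α z)
    (hτ : ∀ y h h' z, (∀ g, ord g < ord z → h g = h' g) → τ y h z = τ y h' z)
    (hcert : ∀ y ∈ D, f y = true → ∀ ω ∈ fair (τ y), ∀ x ∈ D,
      (∀ i ∈ label (fun p => some (ω.2 p)), x i = y i) → f x = true)
    {D₀ : ℝ} (hD₀ : 0 < D₀) (hlabel : ∀ s, #(label s) ≤ D₀) {c : I → ℝ} (hc : ∀ z, 0 < c z)
    (hload : ∀ z h v, ∑ X ∈ through h v,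
      (#(label (reveal (insert z (before ord (ord z))) (h, X)) \
        label (reveal (before ord (ord z)) (h, X))) : ℝ) ≤ c z * #(through h v)) :
    ∃ G : LearningGraph D f, G.complexity ≤ Real.exp (Fintype.card I) *
      (D₀ + ∑ z, c z * √((∏ g ∈ before ord (ord z),
        (Fintype.card (α g) : ℝ) / Fintype.card (ρ g)) * Fintype.card (α z))) := by
  let c' : Fin (T + 1) → ℝ := Fin.cases D₀ (c ∘ ord.symm)
  have hc'_succ : ∀ z, c' (ord z).succ = c z := fun z => congrArg c (ord.symm_apply_apply z)
  obtain ⟨G, hG⟩ := exists_learningGraph_of_stage_load ord label hmono hρα τ hτ hcert (c := c')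
    (Fin.cases hD₀ fun b => hc (ord.symm b)) fun a h v => by
      cases a using Fin.cases with
      | zero =>
        refine (sum_le_card_nsmul _ _ D₀ fun X _ => (Nat.cast_le.2 (card_le_card ?_)).trans
          (hlabel (reveal (before ord 0) (h, X)))).trans_eq (by rw [nsmul_eq_mul, mul_comm]; rfl)
        exact sdiff_subset
      | succ b =>
        obtain ⟨z, rfl⟩ := ord.surjective b
        rw [hc'_succ]
        refine le_of_eq_of_le ?_ (hload z h v)
        rw [← before_succ]
        rfl
  refine ⟨G, hG.trans_eq ?_⟩
  rw [Fin.sum_univ_succ, ← ord.sum_comp]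
  simp only [hc'_succ, Fin.val_succ, Nat.add_sub_cancel, prod_before_succ_div]
  simp [c', before]

end HiddenLists

lemma eq_of_sym2_eq_of_lt {α : Type} [Preorder α] {p q : α × α} (hp : p.1 < p.2)
    (hq : q.1 < q.2) (h : s(p.1, p.2) = s(q.1, q.2)) : p = q := by
  rcases Sym2.eq_iff.1 h with ⟨h₁, h₂⟩ | ⟨h₁, h₂⟩
  · exact Prod.ext h₁ h₂
  · exact absurd (h₁ ▸ h₂ ▸ hp) (lt_asymm hq)

section SubgraphLists

open Finset HiddenLists

variable {k : ℕ}

/-- The edges of `H`, directed from the smaller to the larger endpoint. -/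
abbrev OrientedEdge (H : SimpleGraph (Fin k)) :=
  {p : Fin k × Fin k // p.1 < p.2 ∧ H.Adj p.1 p.2}

/-- The items that carry a list: the vertices and the edges of `H`. -/
abbrev Item (H : SimpleGraph (Fin k)) := Fin k ⊕ OrientedEdge H

variable {H : SimpleGraph (Fin k)}

lemma orientedEdge_sym2_injective :
    Function.Injective fun e : OrientedEdge H => s(e.1.1, e.1.2) := fun e e' h =>
  Subtype.ext (eq_of_sym2_eq_of_lt e.2.1 e'.2.1 h)

lemma exists_orientedEdge_sym2_eq {x : Sym2 (Fin k)} (hx : x ∈ H.edgeSet) :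
    ∃ e : OrientedEdge H, s(e.1.1, e.1.2) = x := by
  induction x with | _ i j
  have hadj : H.Adj i j := hx
  rcases hadj.ne.lt_or_gt with hij | hij
  · exact ⟨⟨(i, j), hij, hadj⟩, rfl⟩
  · exact ⟨⟨(j, i), hij, hadj.symm⟩, Sym2.eq_swap⟩

/-- The list of a vertex of `H` consists of candidates in `Fin n`; the list of an edge consists of
pairs of positions in the lists of its endpoints. -/
abbrev Alphabet (n : ℕ) (len : Item H → ℕ) : Item H → Type
  | .inl _ => Fin n
  | .inr e => Fin (len (.inl e.1.1)) × Fin (len (.inl e.1.2))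

variable {n : ℕ} {len : Item H → ℕ}

instance Alphabet.instFintype : ∀ z, Fintype (Alphabet n len z)
  | .inl _ => inferInstanceAs (Fintype (Fin n))
  | .inr e => inferInstanceAs (Fintype (Fin (len (.inl e.1.1)) × Fin (len (.inl e.1.2))))

instance Alphabet.instDecidableEq : ∀ z, DecidableEq (Alphabet n len z)
  | .inl _ => inferInstanceAs (DecidableEq (Fin n))
  | .inr e => inferInstanceAs (DecidableEq (Fin (len (.inl e.1.1)) × Fin (len (.inl e.1.2))))

@[simp] lemma card_alphabet_inl (j : Fin k) : Fintype.card (Alphabet n len (.inl j)) = n :=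
  Fintype.card_fin n

@[simp] lemma card_alphabet_inr (e : OrientedEdge H) :
    Fintype.card (Alphabet n len (.inr e)) = len (.inl e.1.1) * len (.inl e.1.2) :=
  (Fintype.card_prod _ _).trans (congrArg₂ _ (Fintype.card_fin _) (Fintype.card_fin _))

/-- Following position `l` in the list of the edge `e`, the view `s` shows the slot `q`. -/
def Sees (s : View (fun z => Fin (len z)) (Alphabet n len)) (q : EdgeSlot n) (e : OrientedEdge H)
    (l : Fin (len (.inr e))) : Prop :=
  ∃ (i : Fin (len (.inl e.1.1))) (i' : Fin (len (.inl e.1.2))) (u u' : Fin n),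
    s ⟨.inr e, l⟩ = some (i, i') ∧ s ⟨.inl e.1.1, i⟩ = some u ∧ s ⟨.inl e.1.2, i'⟩ = some u' ∧
      s(q.1.1, q.1.2) = s(u, u')

/-- The slots seen in the view `s`. -/
noncomputable def slots (s : View (fun z => Fin (len z)) (Alphabet n len)) :
    Finset (EdgeSlot n) :=
  (Set.toFinite {q | ∃ e l, Sees s q e l}).toFinset

lemma mem_slots {s : View (fun z => Fin (len z)) (Alphabet n len)} {q : EdgeSlot n} :
    q ∈ slots s ↔ ∃ e l, Sees s q e l :=
  Set.Finite.mem_toFinset _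

lemma slots_mono {s s' : View (fun z => Fin (len z)) (Alphabet n len)}
    (h : ∀ p x, s p = some x → s' p = some x) : slots s ⊆ slots s' := by
  intro q hq
  obtain ⟨e, l, i, i', u, u', hl, hi, hi', hq⟩ := mem_slots.1 hq
  exact mem_slots.2 ⟨e, l, i, i', u, u', h _ _ hl, h _ _ hi, h _ _ hi', hq⟩

lemma Sees.eq {s : View (fun z => Fin (len z)) (Alphabet n len)} {q q' : EdgeSlot n}
    {e : OrientedEdge H} {l : Fin (len (.inr e))} (h : Sees s q e l) (h' : Sees s q' e l) :
    q = q' := by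
  obtain ⟨i, i', u, u', hl, hi, hi', hq⟩ := h
  obtain ⟨a, a', v, v', hl₂, ha, ha', hq'⟩ := h'
  obtain ⟨rfl, rfl⟩ := Prod.ext_iff.1 (Option.some.inj (hl.symm.trans hl₂))
  obtain rfl : u = v := Option.some.inj (hi.symm.trans ha)
  obtain rfl : u' = v' := Option.some.inj (hi'.symm.trans ha')
  exact Subtype.ext (eq_of_sym2_eq_of_lt q.2 q'.2 (hq.trans hq'.symm))

lemma card_le_card_of_sees {s : View (fun z => Fin (len z)) (Alphabet n len)}
    {Q : Finset (EdgeSlot n)} {P : Finset (Σ e : OrientedEdge H, Fin (len (.inr e)))}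
    (h : ∀ q ∈ Q, ∃ p ∈ P, Sees s q p.1 p.2) : #Q ≤ #P :=
  card_le_card_of_forall_subsingleton (fun q p => Sees s q p.1 p.2) h
    fun _ _ _ hq _ hq' => hq.2.eq hq'.2

/-- The pairs of positions of the edge `e` that use the hidden position of its endpoint `j`. -/
def pairsThrough (h : ∀ z, Fin (len z)) (j : Fin k) (e : OrientedEdge H) :
    Finset (Fin (len (.inl e.1.1)) × Fin (len (.inl e.1.2))) :=
  {x | j = e.1.1 ∧ x.1 = h (.inl e.1.1) ∨ j = e.1.2 ∧ x.2 = h (.inl e.1.2)}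

lemma mem_pairsThrough {h : ∀ z, Fin (len z)} {j : Fin k} {e : OrientedEdge H}
    {x : Fin (len (.inl e.1.1)) × Fin (len (.inl e.1.2))} : x ∈ pairsThrough h j e ↔
      j = e.1.1 ∧ x.1 = h (.inl e.1.1) ∨ j = e.1.2 ∧ x.2 = h (.inl e.1.2) :=
  mem_filter_univ x

lemma exists_sees_of_mem_slots_insert_sdiff {W : Finset (Item H)} {z : Item H}
    {ω : HiddenLists (fun z => Fin (len z)) (Alphabet n len)} {q : EdgeSlot n}
    (hq : q ∈ slots (reveal (insert z W) ω) \ slots (reveal W ω)) :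
    ∃ e l, Sees (reveal (insert z W) ω) q e l ∧
      ((z = .inr e ∧ l = ω.1 (.inr e)) ∨
        ∃ j, z = .inl j ∧ ω.2 ⟨.inr e, l⟩ ∈ pairsThrough ω.1 j e) := by
  obtain ⟨hnew, hold⟩ := mem_sdiff.1 hq
  obtain ⟨e, l, hs⟩ := mem_slots.1 hnew
  refine ⟨e, l, hs, ?_⟩
  obtain ⟨i, i', u, u', hl, hi, hi', hqu⟩ := hs
  have hpair : ω.2 ⟨.inr e, l⟩ = (i, i') := (reveal_eq_some_iff.1 hl).2
  rcases reveal_insert_eq_some hl with hlW | ⟨rfl, hlh⟩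
  · rcases reveal_insert_eq_some hi with hiW | ⟨rfl, hih⟩
    · rcases reveal_insert_eq_some hi' with hiW' | ⟨rfl, hih'⟩
      · exact absurd (mem_slots.2 ⟨e, l, i, i', u, u', hlW, hiW, hiW', hqu⟩) hold
      · exact .inr ⟨_, rfl, mem_pairsThrough.2 (.inr ⟨rfl, by rw [hpair]; exact hih'⟩)⟩
    · exact .inr ⟨_, rfl, mem_pairsThrough.2 (.inl ⟨rfl, by rw [hpair]; exact hih⟩)⟩
  · exact .inl ⟨rfl, hlh⟩

lemma card_slots_insert_edge_sdiff_le (W : Finset (Item H)) (e : OrientedEdge H)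
    (ω : HiddenLists (fun z => Fin (len z)) (Alphabet n len)) :
    #(slots (reveal (insert (.inr e) W) ω) \ slots (reveal W ω)) ≤ 1 := by
  refine card_le_card_of_sees (s := reveal (insert (.inr e) W) ω) (P := {⟨e, ω.1 (.inr e)⟩})
    fun q hq => ?_
  obtain ⟨e', l, hs, ⟨he, rfl⟩ | ⟨j, hj, -⟩⟩ := exists_sees_of_mem_slots_insert_sdiff hq
  · obtain rfl := Sum.inr.inj he
    exact ⟨_, mem_singleton_self _, hs⟩
  · cases hj

lemma subgraphFn_eq_true_iff {x : EdgeSlot n → Bool} : subgraphFn H n x = true ↔ HasHCopy H x := by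
  simp [subgraphFn]

variable [DecidableRel H.Adj]

/-- The edges of `H` at the vertex `j`. -/
def incident (H : SimpleGraph (Fin k)) [DecidableRel H.Adj] (j : Fin k) :
    Finset (OrientedEdge H) :=
  {e | j = e.1.1 ∨ j = e.1.2}

lemma mem_incident {j : Fin k} {e : OrientedEdge H} :
    e ∈ incident H j ↔ j = e.1.1 ∨ j = e.1.2 :=
  mem_filter_univ e

lemma card_orientedEdge : Fintype.card (OrientedEdge H) = #H.edgeFinset := by
  rw [← card_univ, ← card_image_of_injective _ orientedEdge_sym2_injective]
  congr 1
  ext x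
  simp only [mem_image, mem_univ, true_and, SimpleGraph.mem_edgeFinset]
  exact ⟨fun ⟨e, he⟩ => he ▸ e.2.2, exists_orientedEdge_sym2_eq⟩

lemma card_incident (v : Fin k) : #(incident H v) = H.degree v := by
  rw [← SimpleGraph.card_incidenceFinset_eq_degree,
    ← card_image_of_injective _ orientedEdge_sym2_injective]
  congr 1
  ext x
  simp only [mem_image, mem_incident, SimpleGraph.mem_incidenceFinset]
  refine ⟨fun ⟨e, he, hx⟩ => hx ▸ ⟨e.2.2, Sym2.mem_iff.2 he⟩, fun ⟨hx, hv⟩ => ?_⟩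
  obtain ⟨e, rfl⟩ := exists_orientedEdge_sym2_eq hx
  exact ⟨e, Sym2.mem_iff.1 hv, rfl⟩

lemma card_slots_le (s : View (fun z => Fin (len z)) (Alphabet n len)) :
    #(slots s) ≤ ∑ e : OrientedEdge H, len (.inr e) := by
  have hcard : #(univ : Finset (Σ e : OrientedEdge H, Fin (len (.inr e)))) =
      ∑ e, len (.inr e) := by
    simp [card_univ]
  refine hcard ▸ card_le_card_of_sees (s := s) fun q hq => ?_
  obtain ⟨e, l, h⟩ := mem_slots.1 hq
  exact ⟨⟨e, l⟩, mem_univ _, h⟩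

lemma card_pairsThrough_mul {h : ∀ z, Fin (len z)} {j : Fin k} {e : OrientedEdge H}
    (hj : e ∈ incident H j) :
    #(pairsThrough h j e) * len (.inl j) = len (.inl e.1.1) * len (.inl e.1.2) := by
  rcases mem_incident.1 hj with rfl | rfl
  · have heq : pairsThrough h e.1.1 e = {h (.inl e.1.1)} ×ˢ univ := by
      ext x
      simp [mem_pairsThrough, e.2.1.ne, Prod.ext_iff, eq_comm]
    rw [heq, card_product, card_singleton, card_fin, one_mul, mul_comm]
  · have heq : pairsThrough h e.1.2 e = univ ×ˢ {h (.inl e.1.2)} := by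
      ext x
      simp [mem_pairsThrough, e.2.1.ne', Prod.ext_iff, eq_comm]
    rw [heq, card_product, card_singleton, card_fin, mul_one]

lemma card_slots_insert_vertex_sdiff_le {W : Finset (Item H)} {j : Fin k}
    (hW : ∀ e ∈ incident H j, .inr e ∉ W)
    (ω : HiddenLists (fun z => Fin (len z)) (Alphabet n len)) :
    #(slots (reveal (insert (.inl j) W) ω) \ slots (reveal W ω)) ≤
      #{p ∈ (incident H j).sigma fun e => univ.erase (ω.1 (.inr e)) |
        ω.2 ⟨.inr p.1, p.2⟩ ∈ pairsThrough ω.1 j p.1} := by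
  refine card_le_card_of_sees (s := reveal (insert (.inl j) W) ω) fun q hq => ?_
  obtain ⟨e, l, hs, ⟨he, -⟩ | ⟨j', hj, hmem⟩⟩ := exists_sees_of_mem_slots_insert_sdiff hq
  · cases he
  obtain rfl := Sum.inl.inj hj
  have hinc : e ∈ incident H j := mem_incident.2 ((mem_pairsThrough.1 hmem).imp And.left And.left)
  have hl : l ≠ ω.1 (.inr e) := by
    obtain ⟨i, i', u, u', hl, -⟩ := id hs
    refine (reveal_eq_some_iff.1 hl).1.resolve_left fun h => hW e hinc ?_
    exact mem_of_mem_insert_of_ne h Sum.inr_ne_inl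
  exact ⟨⟨e, l⟩, mem_filter.2 ⟨mem_sigma.2 ⟨hinc, mem_erase.2 ⟨hl, mem_univ _⟩⟩, hmem⟩, hs⟩

lemma card_filter_pairsThrough {h : ∀ z, Fin (len z)} (v : ∀ z, Alphabet n len z) {j : Fin k}
    {e : OrientedEdge H} (he : e ∈ incident H j) {l : Fin (len (.inr e))} (hl : l ≠ h (.inr e)) :
    (#{X ∈ through h v | X ⟨.inr e, l⟩ ∈ pairsThrough h j e} : ℝ) =
      #(through h v) / len (.inl j) := by
  have hcount := card_filter_through_mul (h := h) v (p := ⟨.inr e, l⟩) hl (pairsThrough h j e)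
  rw [card_alphabet_inr, ← card_pairsThrough_mul (h := h) he] at hcount
  rw [eq_div_iff (Nat.cast_pos.2 (h (.inl j)).pos).ne']
  have hpos : 0 < #(pairsThrough h j e) :=
    card_pos.2 ⟨(h _, h _), mem_pairsThrough.2 ((mem_incident.1 he).imp (⟨·, rfl⟩) (⟨·, rfl⟩))⟩
  refine mul_right_cancel₀ (Nat.cast_pos.2 hpos).ne' ?_
  norm_cast
  linarith

lemma sum_card_slots_insert_vertex_sdiff_le {W : Finset (Item H)} {j : Fin k}
    (hW : ∀ e ∈ incident H j, .inr e ∉ W) (h : ∀ z, Fin (len z))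
    (v : ∀ z, Alphabet n len z) :
    ∑ X ∈ through h v,
      (#(slots (reveal (insert (.inl j) W) (h, X)) \ slots (reveal W (h, X))) : ℝ) ≤
      (∑ e ∈ incident H j, (len (.inr e) : ℝ) / len (.inl j)) * #(through h v) := by
  have hmem : ∀ p ∈ (incident H j).sigma fun e => univ.erase (h (.inr e)),
      (#{X ∈ through h v | X ⟨.inr p.1, p.2⟩ ∈ pairsThrough h j p.1} : ℝ) =
        #(through h v) / len (.inl j) := fun p hp =>
    card_filter_pairsThrough v (mem_sigma.1 hp).1 (ne_of_mem_erase (mem_sigma.1 hp).2)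
  calc ∑ X ∈ through h v,
        (#(slots (reveal (insert (.inl j) W) (h, X)) \ slots (reveal W (h, X))) : ℝ)
      ≤ ∑ X ∈ through h v, (#{p ∈ (incident H j).sigma fun e => univ.erase (h (.inr e)) |
          X ⟨.inr p.1, p.2⟩ ∈ pairsThrough h j p.1} : ℝ) :=
        sum_le_sum fun X _ => Nat.cast_le.2 (card_slots_insert_vertex_sdiff_le hW (h, X))
    _ = ∑ p ∈ (incident H j).sigma fun e => univ.erase (h (.inr e)),
          (#{X ∈ through h v | X ⟨.inr p.1, p.2⟩ ∈ pairsThrough h j p.1} : ℝ) := by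
        exact_mod_cast sum_card_bipartiteAbove_eq_sum_card_bipartiteBelow _
    _ = ∑ e ∈ incident H j, ((len (.inr e) - 1 : ℕ) : ℝ) * (#(through h v) / len (.inl j)) := by
        rw [sum_congr rfl hmem, sum_sigma]
        simp
    _ ≤ (∑ e ∈ incident H j, (len (.inr e) : ℝ) / len (.inl j)) * #(through h v) := by
        rw [sum_mul]
        refine sum_le_sum fun e _ => ?_
        rw [div_mul_eq_mul_div, mul_div_assoc]
        gcongr
        exact Nat.sub_le _ _

/-- The hidden entries that spell out the copy `φ` of `H` when the hidden positions are `h`. -/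
def target (φ : Fin k → Fin n) (h : ∀ z, Fin (len z)) : ∀ z, Alphabet n len z
  | .inl j => φ j
  | .inr e => (h (.inl e.1.1), h (.inl e.1.2))

lemma target_congr (φ : Fin k → Fin n) {T : ℕ} {ord : Item H ≃ Fin T}
    (hord : ∀ j, ∀ e ∈ incident H j, ord (.inl j) < ord (.inr e)) {h h' : ∀ z, Fin (len z)}
    (z : Item H) (heq : ∀ g, ord g < ord z → h g = h' g) : target φ h z = target φ h' z := by
  rcases z with j | e
  · rfl
  · exact congrArg₂ Prod.mk (heq _ (hord _ e (mem_incident.2 (.inl rfl))))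
      (heq _ (hord _ e (mem_incident.2 (.inr rfl))))

lemma mem_slots_of_mem_fair {φ : Fin k → Fin n}
    {ω : HiddenLists (fun z => Fin (len z)) (Alphabet n len)} (hω : ω ∈ fair (target φ))
    {i j : Fin k} (hij : H.Adj i j) {q : EdgeSlot n} (hq : s(q.1.1, q.1.2) = s(φ i, φ j)) :
    q ∈ slots fun p => some (ω.2 p) := by
  wlog hlt : i < j generalizing i j
  · exact this hij.symm (hq.trans Sym2.eq_swap) (hij.ne.lt_or_gt.resolve_left hlt)
  have hread : ∀ z, some (ω.2 ⟨z, ω.1 z⟩) = some (target φ ω.1 z) := fun z =>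
    congrArg some ((mem_onlyThrough.1 (mem_fair.1 hω) ⟨z, ω.1 z⟩).2 rfl)
  exact mem_slots.2 ⟨⟨(i, j), hlt, hij⟩, _, _, _, _, _, hread (.inr ⟨(i, j), hlt, hij⟩),
    hread (.inl i), hread (.inl j), hq⟩

lemma subgraphFn_eq_true_of_mem_fair {φ : Fin k ↪ Fin n} {x y : EdgeSlot n → Bool}
    (hφ : ∀ i j, H.Adj i j → ∀ q : EdgeSlot n,
      ((q.1.1 = φ i ∧ q.1.2 = φ j) ∨ (q.1.1 = φ j ∧ q.1.2 = φ i)) → y q = true)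
    {ω : HiddenLists (fun z => Fin (len z)) (Alphabet n len)} (hω : ω ∈ fair (target φ))
    (hxy : ∀ q ∈ slots fun p => some (ω.2 p), x q = y q) : subgraphFn H n x = true :=
  subgraphFn_eq_true_iff.2 ⟨φ, fun i j hij q hq =>
    (hxy q (mem_slots_of_mem_fair hω hij (Sym2.eq_iff.2 hq))).trans (hφ i j hij q hq)⟩

theorem exists_learningGraph_subgraphFn (hlen : ∀ z, 0 < len z)
    (hcard : ∀ z, len z ≤ Fintype.card (Alphabet n len z)) {T : ℕ} {ord : Item H ≃ Fin T}
    (hord : ∀ j, ∀ e ∈ incident H j, ord (.inl j) < ord (.inr e)) {D₀ : ℝ} (hD₀ : 0 < D₀)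
    (hsum : ∑ e : OrientedEdge H, (len (.inr e) : ℝ) ≤ D₀) {c : Item H → ℝ} (hc : ∀ z, 0 < c z)
    (hcvert : ∀ j, ∑ e ∈ incident H j, (len (.inr e) : ℝ) / len (.inl j) ≤ c (.inl j))
    (hcedge : ∀ e, 1 ≤ c (.inr e)) :
    ∃ G : LearningGraph (Set.univ : Set (EdgeSlot n → Bool)) (subgraphFn H n),
      G.complexity ≤ Real.exp (Fintype.card (Item H)) * (D₀ + ∑ z, c z *
        √((∏ g ∈ before ord (ord z), (Fintype.card (Alphabet n len g) : ℝ) / len g) *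
          Fintype.card (Alphabet n len z))) := by
  classical
  have hne : ∀ z, Nonempty (Alphabet n len z) := fun z =>
    Fintype.card_pos_iff.1 ((hlen z).trans_le (hcard z))
  have hpos : ∀ z, Nonempty (Fin (len z)) := fun z => ⟨⟨0, hlen z⟩⟩
  let copy (y : EdgeSlot n → Bool) : Fin k → Fin n :=
    if hy : HasHCopy H y then hy.choose else fun j => (hne (.inl j)).some
  have hG := HiddenLists.exists_learningGraph (f := subgraphFn H n) (D := Set.univ)
    ord slots (fun _ _ => slots_mono) (by simpa only [Fintype.card_fin])
    (fun y => target (copy y)) (fun y h h' z => target_congr _ hord z) ?_ hD₀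
    (fun s => (Nat.cast_le.2 (card_slots_le s)).trans (by simpa using hsum)) hc ?_
  · simpa only [Fintype.card_fin] using hG
  · intro y _ hy ω hω x _ hxy
    have hy := subgraphFn_eq_true_iff.1 hy
    rw [show copy y = hy.choose from dif_pos hy] at hω
    exact subgraphFn_eq_true_of_mem_fair hy.choose_spec hω hxy
  · rintro (j | e) h v
    · refine (sum_card_slots_insert_vertex_sdiff_le (fun e he hmem => ?_) h v).trans
        (mul_le_mul_of_nonneg_right (hcvert j) (Nat.cast_nonneg _))
      exact (mem_before.1 hmem).not_gt (hord j e he)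
    · calc _ ≤ ∑ _ ∈ through h v, (1 : ℝ) := sum_le_sum fun _ _ =>
            Nat.cast_le_one.2 (card_slots_insert_edge_sdiff_le _ e _)
        _ ≤ c (.inr e) * #(through h v) := by
            rw [sum_const, nsmul_one]
            exact le_mul_of_one_le_left (Nat.cast_nonneg _) (hcedge e)

end SubgraphLists

section PowerLists

open Finset HiddenLists

variable {k n : ℕ} {H : SimpleGraph (Fin k)} {s : Item H → ℝ}

lemma exists_equiv_fin_strictMono {I : Type} [Fintype I] (key : I → ℕ) :
    ∃ ord : I ≃ Fin (Fintype.card I), ∀ z z', key z < key z' → ord z < ord z' := by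
  let e := Fintype.equivFin I
  refine ⟨e.trans (Tuple.sort (key ∘ e.symm)).symm, fun z z' h => lt_of_not_ge fun hle => ?_⟩
  have hsorted := Tuple.monotone_sort (key ∘ e.symm) hle
  simp only [Function.comp_apply, Equiv.trans_apply, Equiv.apply_symm_apply,
    Equiv.symm_apply_apply] at hsorted
  exact hsorted.not_gt h

/-- Lists of length `⌈n ^ s z⌉`. -/
noncomputable def powLen (n : ℕ) (s : Item H → ℝ) (z : Item H) : ℕ := ⌈(n : ℝ) ^ s z⌉₊

/-- The exponent of the alphabet size of `z` when the lists have length about `n ^ s`. -/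
def sizeExp (s : Item H → ℝ) : Item H → ℝ
  | .inl _ => 1
  | .inr e => s (.inl e.1.1) + s (.inl e.1.2)

lemma rpow_le_powLen (z : Item H) : (n : ℝ) ^ s z ≤ powLen n s z := Nat.le_ceil _

lemma powLen_pos (hn : 1 ≤ n) (z : Item H) : 0 < powLen n s z :=
  Nat.ceil_pos.2 (Real.rpow_pos_of_pos (by exact_mod_cast hn) _)

lemma powLen_le (hn : 1 ≤ n) {z : Item H} (hs : 0 ≤ s z) : (powLen n s z : ℝ) ≤ 2 * n ^ s z := by
  have hone : (1 : ℝ) ≤ n ^ s z := Real.one_le_rpow (by exact_mod_cast hn) hs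
  rw [powLen]
  linarith [Nat.ceil_lt_add_one (zero_le_one.trans hone)]

lemma rpow_sizeExp_le_card (hn : 1 ≤ n) (z : Item H) :
    (n : ℝ) ^ sizeExp s z ≤ Fintype.card (Alphabet n (powLen n s) z) := by
  have hn₀ : (0 : ℝ) < n := by exact_mod_cast hn
  rcases z with j | e
  · simp [sizeExp]
  · rw [sizeExp, Real.rpow_add hn₀, card_alphabet_inr, Nat.cast_mul]
    gcongr <;> exact rpow_le_powLen _

lemma card_alphabet_powLen_le (hn : 1 ≤ n) (hs : ∀ z, 0 ≤ s z) (z : Item H) :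
    (Fintype.card (Alphabet n (powLen n s) z) : ℝ) ≤ 4 * n ^ sizeExp s z := by
  have hn₀ : (0 : ℝ) < n := by exact_mod_cast hn
  rcases z with j | e
  · rw [card_alphabet_inl, sizeExp, Real.rpow_one]
    linarith
  · rw [card_alphabet_inr, sizeExp, Real.rpow_add hn₀, Nat.cast_mul]
    calc (powLen n s (.inl e.1.1) : ℝ) * powLen n s (.inl e.1.2)
        ≤ (2 * n ^ s (.inl e.1.1)) * (2 * n ^ s (.inl e.1.2)) := by
          gcongr <;> exact powLen_le hn (hs _)
      _ = _ := by ring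

lemma powLen_le_card_alphabet (hn : 1 ≤ n) {z : Item H} (hsize : s z ≤ sizeExp s z) :
    powLen n s z ≤ Fintype.card (Alphabet n (powLen n s) z) :=
  Nat.ceil_le.2 ((Real.rpow_le_rpow_of_exponent_le (by exact_mod_cast hn) hsize).trans
    (rpow_sizeExp_le_card hn z))

lemma card_alphabet_div_powLen_le (hn : 1 ≤ n) (hs : ∀ z, 0 ≤ s z) (z : Item H) :
    (Fintype.card (Alphabet n (powLen n s) z) : ℝ) / powLen n s z ≤
      4 * n ^ (sizeExp s z - s z) := by
  have hn₀ : (0 : ℝ) < n := by exact_mod_cast hn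
  rw [Real.rpow_sub hn₀, ← mul_div_assoc]
  gcongr
  · exact card_alphabet_powLen_le hn hs z
  · exact rpow_le_powLen z

variable [DecidableRel H.Adj]

/-- The exponent of the square root factor in the cost of the stage that reads the hidden entry of
`z`, when items are read in the order of `key`. Ties of `key` are counted against `z`. -/
noncomputable def stageExp (s : Item H → ℝ) (key : Item H → ℕ) (z : Item H) : ℝ :=
  (∑ g with key g ≤ key z, (sizeExp s g - s g) + s z) / 2

lemma sqrt_prod_before_le (hn : 1 ≤ n) (hs : ∀ z, 0 ≤ s z) (hsize : ∀ z, s z ≤ sizeExp s z)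
    {key : Item H → ℕ} {T : ℕ} {ord : Item H ≃ Fin T}
    (hord : ∀ z z', key z < key z' → ord z < ord z') (z : Item H) :
    √((∏ g ∈ before ord (ord z),
        (Fintype.card (Alphabet n (powLen n s) g) : ℝ) / powLen n s g) *
          Fintype.card (Alphabet n (powLen n s) z)) ≤
      2 ^ Fintype.card (Item H) * n ^ stageExp s key z := by
  have hn₀ : (0 : ℝ) < n := by exact_mod_cast hn
  have hz : z ∉ before ord (ord z) := fun h => (mem_before.1 h).false
  have hexp : ∑ g ∈ before ord (ord z), (sizeExp s g - s g) + sizeExp s z ≤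
      2 * stageExp s key z := by
    have hsub : insert z (before ord (ord z)) ⊆ ({g | key g ≤ key z} : Finset (Item H)) := by
      intro g hg
      rw [mem_filter_univ]
      by_contra! hlt
      rcases mem_insert.1 hg with rfl | hg
      · exact hlt.false
      · exact (mem_before.1 hg).not_gt (hord _ _ hlt)
    have hle := sum_le_sum_of_subset_of_nonneg hsub fun g _ _ => sub_nonneg.2 (hsize g)
    rw [sum_insert hz] at hle
    rw [stageExp]
    linarith
  have hcard : #(before ord (ord z)) + 1 ≤ Fintype.card (Item H) :=
    card_insert_of_notMem hz ▸ card_le_univ _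
  refine Real.sqrt_le_iff.2 ⟨by positivity, ?_⟩
  calc (∏ g ∈ before ord (ord z),
        (Fintype.card (Alphabet n (powLen n s) g) : ℝ) / powLen n s g) *
          Fintype.card (Alphabet n (powLen n s) z)
      ≤ (∏ g ∈ before ord (ord z), 4 * (n : ℝ) ^ (sizeExp s g - s g)) *
          (4 * n ^ sizeExp s z) := by
        gcongr
        · exact card_alphabet_div_powLen_le hn hs _
        · exact card_alphabet_powLen_le hn hs z
    _ = 4 ^ (#(before ord (ord z)) + 1) *
          (n : ℝ) ^ (∑ g ∈ before ord (ord z), (sizeExp s g - s g) + sizeExp s z) := by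
        rw [prod_mul_distrib, prod_const, Real.rpow_add hn₀, Real.rpow_sum_of_pos hn₀]
        ring
    _ ≤ 4 ^ Fintype.card (Item H) * n ^ (2 * stageExp s key z) := by
        gcongr
        · norm_num
        · exact_mod_cast hn
    _ = (2 ^ Fintype.card (Item H) * n ^ stageExp s key z) ^ 2 := by
        rw [mul_pow, pow_right_comm, two_mul, Real.rpow_add hn₀]
        norm_num [sq]

lemma sum_powLen_le (hn : 1 ≤ n) (hs : ∀ z, 0 ≤ s z) {β : ℝ} (hβ : ∀ e, s (.inr e) ≤ β) :
    ∑ e : OrientedEdge H, (powLen n s (.inr e) : ℝ) ≤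
      2 * Fintype.card (OrientedEdge H) * n ^ β := by
  calc ∑ e : OrientedEdge H, (powLen n s (.inr e) : ℝ)
      ≤ ∑ e : OrientedEdge H, 2 * (n : ℝ) ^ β := by
        refine sum_le_sum fun e _ => (powLen_le hn (hs _)).trans ?_
        gcongr
        · exact_mod_cast hn
        · exact hβ e
    _ = 2 * Fintype.card (OrientedEdge H) * n ^ β := by
        rw [sum_const, card_univ, nsmul_eq_mul]
        ring

lemma sum_incident_powLen_div_le (hn : 1 ≤ n) (hs : ∀ z, 0 ≤ s z) {j : Fin k} {γ : ℝ}
    (hγ : ∀ e ∈ incident H j, s (.inr e) - s (.inl j) ≤ γ) :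
    ∑ e ∈ incident H j, (powLen n s (.inr e) : ℝ) / powLen n s (.inl j) ≤
      2 * Fintype.card (OrientedEdge H) * n ^ γ := by
  have hn₀ : (0 : ℝ) < n := by exact_mod_cast hn
  calc ∑ e ∈ incident H j, (powLen n s (.inr e) : ℝ) / powLen n s (.inl j)
      ≤ ∑ e ∈ incident H j, 2 * (n : ℝ) ^ γ := by
        refine sum_le_sum fun e he => ?_
        calc (powLen n s (.inr e) : ℝ) / powLen n s (.inl j)
            ≤ 2 * n ^ s (.inr e) / n ^ s (.inl j) := by
              gcongr
              · exact powLen_le hn (hs _)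
              · exact rpow_le_powLen _
          _ = 2 * n ^ (s (.inr e) - s (.inl j)) := by rw [mul_div_assoc, Real.rpow_sub hn₀]
          _ ≤ 2 * n ^ γ := by
              gcongr
              · exact_mod_cast hn
              · exact hγ e he
    _ ≤ 2 * Fintype.card (OrientedEdge H) * n ^ γ := by
        rw [sum_const, nsmul_eq_mul, mul_left_comm, ← mul_assoc]
        gcongr
        exact card_le_univ _

/-- The functions `f_{H,n}` have learning graphs of complexity `O(n ^ β)`. -/
def HasLearningGraphExponent (H : SimpleGraph (Fin k)) (β : ℝ) : Prop :=
  ∃ c : ℝ, 0 < c ∧ ∀ n : ℕ, 1 ≤ n →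
    ∃ G : LearningGraph (Set.univ : Set (EdgeSlot n → Bool)) (subgraphFn H n),
      G.complexity ≤ c * (n : ℝ) ^ β

theorem hasLearningGraphExponent_of_stageExp_le {s : Item H → ℝ} (hs : ∀ z, 0 ≤ s z)
    (hsize : ∀ z, s z ≤ sizeExp s z) {key : Item H → ℕ}
    (hkey : ∀ j, ∀ e ∈ incident H j, key (.inl j) < key (.inr e)) {β : ℝ}
    (hinit : ∀ e, s (.inr e) ≤ β)
    (hvert : ∀ j, ∀ e ∈ incident H j, s (.inr e) - s (.inl j) + stageExp s key (.inl j) ≤ β)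
    (hedge : ∀ e, stageExp s key (.inr e) ≤ β) :
    HasLearningGraphExponent H β := by
  obtain ⟨ord, hord⟩ := exists_equiv_fin_strictMono key
  let M : ℝ := 2 * Fintype.card (OrientedEdge H) + 1
  let N : ℕ := Fintype.card (Item H)
  refine ⟨Real.exp N * (M + N * (M * 2 ^ N)), by positivity, fun n hn => ?_⟩
  have hn₀ : (0 : ℝ) < n := by exact_mod_cast hn
  have hn₁ : (1 : ℝ) ≤ n := by exact_mod_cast hn
  obtain ⟨G, hG⟩ := exists_learningGraph_subgraphFn (n := n) (powLen_pos (s := s) hn)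
    (fun z => powLen_le_card_alphabet hn (hsize z))
    (fun j e he => hord _ _ (hkey j e he)) (D₀ := M * n ^ β) (by positivity)
    ((sum_powLen_le hn hs hinit).trans (by gcongr; simp [M]))
    (c := fun z => M * n ^ (β - stageExp s key z)) (fun z => by positivity)
    (fun j => (sum_incident_powLen_div_le hn hs fun e he =>
      le_sub_iff_add_le.2 (hvert j e he)).trans (by gcongr; simp [M]))
    (fun e => one_le_mul_of_one_le_of_one_le (by simp [M])
      (Real.one_le_rpow hn₁ (sub_nonneg.2 (hedge e))))
  refine ⟨G, hG.trans ?_⟩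
  have hstage : ∀ z, M * (n : ℝ) ^ (β - stageExp s key z) *
      √((∏ g ∈ before ord (ord z),
        (Fintype.card (Alphabet n (powLen n s) g) : ℝ) / powLen n s g) *
          Fintype.card (Alphabet n (powLen n s) z)) ≤ M * 2 ^ N * n ^ β := by
    intro z
    calc _ ≤ M * (n : ℝ) ^ (β - stageExp s key z) * (2 ^ N * n ^ stageExp s key z) := by
          gcongr
          exact sqrt_prod_before_le hn hs hsize hord z
      _ = M * 2 ^ N * (n ^ (β - stageExp s key z) * n ^ stageExp s key z) := by ring
      _ = M * 2 ^ N * n ^ β := by rw [← Real.rpow_add hn₀, sub_add_cancel]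
  calc _ ≤ Real.exp N * (M * n ^ β + ∑ z : Item H, M * 2 ^ N * n ^ β) :=
        mul_le_mul_of_nonneg_left (add_le_add le_rfl (sum_le_sum fun z _ => hstage z))
          (Real.exp_pos _).le
    _ = Real.exp N * (M + N * (M * 2 ^ N)) * n ^ β := by
        rw [sum_const, card_univ, nsmul_eq_mul]
        ring

end PowerLists

section Algorithms

open Finset HiddenLists

variable {k : ℕ} {H : SimpleGraph (Fin k)} [DecidableRel H.Adj]

lemma stageExp_eq (s : Item H → ℝ) (key : Item H → ℕ) (z : Item H) :
    stageExp s key z = (∑ j, (if key (.inl j) ≤ key z then 1 - s (.inl j) else 0) +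
      ∑ e : OrientedEdge H, (if key (.inr e) ≤ key z then
        s (.inl e.1.1) + s (.inl e.1.2) - s (.inr e) else 0) + s z) / 2 := by
  rw [stageExp, sum_filter, Fintype.sum_sum_type]
  rfl

lemma hasLearningGraphExponent_of_uniform_lists {ρ β : ℝ} (hρ₀ : 0 ≤ ρ) (hρ₁ : ρ ≤ 1) (hβ₀ : 0 ≤ β)
    (hβρ : β ≤ 2 * ρ) (hvert : k * (1 - ρ) ≤ ρ)
    (hedge : k * (1 - ρ) + #H.edgeFinset * (2 * ρ - β) ≤ β) :
    HasLearningGraphExponent H β := by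
  refine hasLearningGraphExponent_of_stageExp_le (s := Sum.elim (fun _ => ρ) fun _ => β)
    (key := Sum.elim (fun _ => 0) fun _ => 1) ?_ ?_ (fun _ _ _ => zero_lt_one)
    (fun _ => le_rfl) (fun j e _ => ?_) fun e => ?_
  · rintro (_ | _)
    exacts [hρ₀, hβ₀]
  · rintro (_ | _)
    exacts [hρ₁, hβρ.trans_eq (two_mul ρ)]
  · rw [stageExp_eq]
    simp only [Sum.elim_inl, Sum.elim_inr, le_refl, if_true, one_ne_zero, if_false, sum_const,
      nonpos_iff_eq_zero, card_fin, nsmul_eq_mul, mul_zero, add_zero]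
    linarith
  · rw [stageExp_eq]
    simp only [Sum.elim_inl, Sum.elim_inr, le_refl, if_true, zero_le_one, sum_const, card_univ,
      Fintype.card_fin, card_orientedEdge, nsmul_eq_mul]
    linarith

/-- The exponents of the list lengths when the vertex `v` is treated separately: `v` has a list of
constant length, the other vertices have exponent `ρ`, the edges at `v` have exponent `μ` and the
other edges have exponent `β`. -/
def lastVertexExp (H : SimpleGraph (Fin k)) [DecidableRel H.Adj] (v : Fin k) (ρ μ β : ℝ) :
    Item H → ℝ :=
  Sum.elim (fun j => if j = v then 0 else ρ) fun e => if e ∈ incident H v then μ else β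

/-- The order in which `v` is read after all items away from `v`, and before its own edges. -/
def lastVertexKey (H : SimpleGraph (Fin k)) [DecidableRel H.Adj] (v : Fin k) : Item H → ℕ :=
  Sum.elim (fun j => if j = v then 2 else 0) fun e => if e ∈ incident H v then 3 else 1

lemma sum_ite_mem_incident (v : Fin k) (p q : ℝ) :
    ∑ e : OrientedEdge H, (if e ∈ incident H v then p else q) =
      H.degree v * p + (#H.edgeFinset - H.degree v) * q := by
  have hsplit : #(incident H v) + #(incident H v)ᶜ = #H.edgeFinset :=
    (card_add_card_compl _).trans card_orientedEdge
  rw [← sum_add_sum_compl (incident H v), sum_congr rfl fun e he => if_pos he,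
    sum_congr rfl fun e he => if_neg (mem_compl.1 he), sum_const, sum_const, ← hsplit,
    ← card_incident]
  push_cast [nsmul_eq_mul]
  ring

lemma sum_ite_eq_vertex (v : Fin k) (p q : ℝ) :
    ∑ j : Fin k, (if j = v then p else q) = p + (k - 1) * q := by
  rw [← add_sum_erase univ _ (mem_univ v), if_pos rfl,
    sum_congr rfl fun j hj => if_neg (ne_of_mem_erase hj), sum_const,
    card_erase_of_mem (mem_univ v), card_fin, nsmul_eq_mul, Nat.cast_pred v.pos]

lemma lastVertexExp_inl (v : Fin k) (ρ μ β : ℝ) (j : Fin k) :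
    lastVertexExp H v ρ μ β (.inl j) = if j = v then 0 else ρ := rfl

lemma lastVertexExp_inr (v : Fin k) (ρ μ β : ℝ) (e : OrientedEdge H) :
    lastVertexExp H v ρ μ β (.inr e) = if e ∈ incident H v then μ else β := rfl

lemma lastVertexExp_gap (v : Fin k) (ρ μ β : ℝ) (e : OrientedEdge H) :
    lastVertexExp H v ρ μ β (.inl e.1.1) + lastVertexExp H v ρ μ β (.inl e.1.2) -
      lastVertexExp H v ρ μ β (.inr e) = if e ∈ incident H v then ρ - μ else 2 * ρ - β := by
  have hne : e.1.1 ≠ e.1.2 := e.2.1.ne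
  simp only [lastVertexExp_inl, lastVertexExp_inr, mem_incident, eq_comm (a := v)]
  by_cases h₁ : e.1.1 = v
  · simp [h₁, (h₁ ▸ hne).symm]
  · by_cases h₂ : e.1.2 = v
    · simp [h₁, h₂]
    · simp [h₁, h₂, two_mul]

lemma lastVertexKey_inl (v j : Fin k) :
    lastVertexKey H v (.inl j) = if j = v then 2 else 0 := rfl

lemma lastVertexKey_inr (v : Fin k) (e : OrientedEdge H) :
    lastVertexKey H v (.inr e) = if e ∈ incident H v then 3 else 1 := rfl

lemma lastVertexKey_inl_lt_inr {v j : Fin k} {e : OrientedEdge H} (he : e ∈ incident H j) :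
    lastVertexKey H v (.inl j) < lastVertexKey H v (.inr e) := by
  rw [lastVertexKey_inl, lastVertexKey_inr]
  by_cases hj : j = v
  · rw [if_pos hj, if_pos (hj ▸ he)]
    norm_num
  · rw [if_neg hj]
    split_ifs <;> norm_num

lemma stageExp_lastVertex (v : Fin k) (ρ μ β : ℝ) (z : Item H) {κ : ℕ}
    (hκ : lastVertexKey H v z = κ) :
    stageExp (lastVertexExp H v ρ μ β) (lastVertexKey H v) z =
      ((k - 1) * (1 - ρ)
        + (if 1 ≤ κ then (#H.edgeFinset - H.degree v) * (2 * ρ - β) else 0)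
        + (if 2 ≤ κ then 1 else 0)
        + (if 3 ≤ κ then H.degree v * (ρ - μ) else 0)
        + lastVertexExp H v ρ μ β z) / 2 := by
  have hvert : ∀ j, (if lastVertexKey H v (.inl j) ≤ κ then
        1 - lastVertexExp H v ρ μ β (.inl j) else 0) =
      if j = v then if 2 ≤ κ then 1 else 0 else 1 - ρ := by
    intro j
    by_cases hj : j = v <;> simp [lastVertexKey_inl, lastVertexExp_inl, hj]
  have hedge : ∀ e, (if lastVertexKey H v (.inr e) ≤ κ then
        lastVertexExp H v ρ μ β (.inl e.1.1) + lastVertexExp H v ρ μ β (.inl e.1.2) -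
          lastVertexExp H v ρ μ β (.inr e) else 0) =
      if e ∈ incident H v then if 3 ≤ κ then ρ - μ else 0
        else if 1 ≤ κ then 2 * ρ - β else 0 := by
    intro e
    rw [lastVertexExp_gap]
    by_cases he : e ∈ incident H v <;> simp [lastVertexKey_inr, he]
  rw [stageExp_eq, hκ, sum_congr rfl fun j _ => hvert j, sum_congr rfl fun e _ => hedge e,
    sum_ite_eq_vertex, sum_ite_mem_incident]
  split_ifs <;> ring

lemma lastVertexExp_nonneg {v : Fin k} {ρ μ β : ℝ} (hρ : 0 ≤ ρ) (hμ : 0 ≤ μ) (hβ : 0 ≤ β)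
    (z : Item H) : 0 ≤ lastVertexExp H v ρ μ β z := by
  rcases z with j | e <;> simp only [lastVertexExp_inl, lastVertexExp_inr] <;> split_ifs <;>
    first | exact le_rfl | assumption

lemma lastVertexExp_le_sizeExp {v : Fin k} {ρ μ β : ℝ} (hρ : ρ ≤ 1) (hμρ : μ ≤ ρ)
    (hβρ : β ≤ 2 * ρ) (z : Item H) :
    lastVertexExp H v ρ μ β z ≤ sizeExp (lastVertexExp H v ρ μ β) z := by
  rcases z with j | e
  · rw [lastVertexExp_inl, sizeExp]
    split_ifs
    exacts [zero_le_one, hρ]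
  · rw [← sub_nonneg]
    refine le_of_le_of_eq ?_ (lastVertexExp_gap v ρ μ β e).symm
    split_ifs
    exacts [sub_nonneg.2 hμρ, sub_nonneg.2 hβρ]

lemma hasLearningGraphExponent_of_last_vertex (v : Fin k) {ρ μ β : ℝ} (hρ₀ : 0 ≤ ρ) (hρ₁ : ρ ≤ 1)
    (hμ₀ : 0 ≤ μ) (hμρ : μ ≤ ρ) (hμβ : μ ≤ β) (hβρ : β ≤ 2 * ρ) (hvert : (k - 1) * (1 - ρ) ≤ ρ)
    (hedge : (k - 1) * (1 - ρ) + (#H.edgeFinset - H.degree v) * (2 * ρ - β) ≤ β)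
    (hlast : (k - 1) * (1 - ρ) + (#H.edgeFinset - H.degree v) * (2 * ρ - β) + 1 + 2 * μ ≤ 2 * β)
    (hlastEdge : (k - 1) * (1 - ρ) + (#H.edgeFinset - H.degree v) * (2 * ρ - β) + 1 +
      H.degree v * (ρ - μ) + μ ≤ 2 * β) :
    HasLearningGraphExponent H β := by
  have hexp (e : OrientedEdge H) : lastVertexExp H v ρ μ β (.inr e) ≤ β := by
    rw [lastVertexExp_inr]
    split_ifs
    exacts [hμβ, le_rfl]
  refine hasLearningGraphExponent_of_stageExp_le (key := lastVertexKey H v)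
    (lastVertexExp_nonneg hρ₀ hμ₀ (hμ₀.trans hμβ)) (lastVertexExp_le_sizeExp hρ₁ hμρ hβρ)
    (fun _ _ => lastVertexKey_inl_lt_inr) hexp (fun j e he => ?_) fun e => ?_
  · by_cases hj : j = v
    · rw [stageExp_lastVertex v ρ μ β (.inl j) (if_pos hj), lastVertexExp_inr,
        lastVertexExp_inl, if_pos (hj ▸ he), if_pos hj]
      simp only [Nat.one_le_ofNat, le_refl, Nat.reduceLeDiff, if_true, if_false]
      linarith
    · rw [stageExp_lastVertex v ρ μ β (.inl j) (if_neg hj), lastVertexExp_inl, if_neg hj]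
      simp only [nonpos_iff_eq_zero, one_ne_zero, OfNat.ofNat_ne_zero, if_false]
      linarith [hexp e]
  · by_cases he : e ∈ incident H v
    · rw [stageExp_lastVertex v ρ μ β (.inr e) (if_pos he), lastVertexExp_inr, if_pos he]
      simp only [Nat.one_le_ofNat, Nat.reduceLeDiff, le_refl, if_true]
      linarith
    · rw [stageExp_lastVertex v ρ μ β (.inr e) (if_neg he), lastVertexExp_inr, if_neg he]
      simp only [le_refl, Nat.not_ofNat_le_one, if_true, if_false]
      linarith

theorem hasLearningGraphExponent_of_card_edges {m : ℕ} (hk : 0 < k) (hm : #H.edgeFinset = m) :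
    HasLearningGraphExponent H
      (2 - 2 / k - ((k : ℝ) ^ 2 - 2 * (m + 1)) / (k * (k + 1) * (m + 1))) := by
  have hk₀ : (0 : ℝ) < k := Nat.cast_pos.2 hk
  let ρ : ℝ := k / (k + 1)
  let σ : ℝ := ρ / (m + 1)
  have hρ₀ : 0 ≤ ρ := by positivity
  have hρ : k * (1 - ρ) = ρ := by
    simp only [ρ]
    field_simp
    ring
  have hσ₀ : 0 ≤ σ := by positivity
  have hσ : (m + 1) * σ = ρ := mul_div_cancel₀ _ (by positivity)
  have hσρ : σ ≤ ρ := div_le_self hρ₀ (by simp)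
  have hβ : 2 - 2 / k - ((k : ℝ) ^ 2 - 2 * (m + 1)) / (k * (k + 1) * (m + 1)) = 2 * ρ - σ := by
    simp only [σ, ρ]
    field_simp
    ring
  rw [hβ]
  refine hasLearningGraphExponent_of_uniform_lists (ρ := ρ) hρ₀
    (div_le_one_of_le₀ (by simp) (by positivity)) (by linarith) (by linarith) hρ.le ?_
  rw [hm, hρ, sub_sub_cancel]
  linarith

theorem hasLearningGraphExponent_of_degree {m d : ℕ} (hm : #H.edgeFinset = m) {v : Fin k}
    (hd : H.degree v = d) (hd₁ : 1 ≤ d) :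
    HasLearningGraphExponent H
      (2 - 2 / k - (2 * (k : ℝ) - d - 3) / (k * (d + 1) * ((m : ℝ) - d + 2))) := by
  have hk₀ : (0 : ℝ) < k := Nat.cast_pos.2 v.pos
  have hdk : (d : ℝ) + 1 ≤ k := by
    have := H.degree_lt_card_verts v
    rw [hd, Fintype.card_fin] at this
    exact_mod_cast this
  have hd₀ : (1 : ℝ) ≤ d := by exact_mod_cast hd₁
  have hdm : (0 : ℝ) ≤ m - d := by
    rw [sub_nonneg, ← hm, ← hd]
    exact_mod_cast H.degree_le_card_edgeFinset v
  let ρ : ℝ := 1 - 1 / k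
  let σ : ℝ := (2 * k - d - 3) / (k * (d + 1) * (m - d + 2))
  let μ : ℝ := ρ * d / (d + 1)
  have hβ : 2 - 2 / k - (2 * (k : ℝ) - d - 3) / (k * (d + 1) * ((m : ℝ) - d + 2)) = 2 * ρ - σ := by
    ring
  have hρ₀ : 0 ≤ ρ := sub_nonneg.2 (div_le_one_of_le₀ (by linarith) hk₀.le)
  have hρ₁ : ρ ≤ 1 := sub_le_self _ (by positivity)
  have hρ : (k - 1) * (1 - ρ) = ρ := by
    simp only [ρ]
    field_simp
    ring
  have hσ₀ : 0 ≤ σ := div_nonneg (by linarith) (by positivity)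
  have hμρ : μ ≤ ρ := div_le_of_le_mul₀ (by positivity) hρ₀ (by linarith)
  have hμ : d * (ρ - μ) = μ := by
    simp only [μ]
    field_simp
    ring
  have hρμ : ρ - μ ≤ μ :=
    (le_mul_of_one_le_left (sub_nonneg.2 hμρ) hd₀).trans_eq hμ
  have hσ : (m - d + 2) * σ = 3 * ρ - 1 - 2 * μ := by
    have : (m : ℝ) - d + 2 ≠ 0 := by positivity
    simp only [σ, μ, ρ]
    field_simp
    ring
  have hσρ : (m - d + 2) * σ ≤ ρ := by linarith
  have hmσ : 0 ≤ (m - d) * σ := mul_nonneg hdm hσ₀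
  rw [hβ]
  refine hasLearningGraphExponent_of_last_vertex v (ρ := ρ) (μ := μ) hρ₀ hρ₁
    (by positivity) hμρ (by linarith) (by linarith) hρ.le ?_ ?_ ?_ <;>
  rw [hm, hd, hρ, sub_sub_cancel] <;> linarith

theorem subgraph_learningGraph_main_general {m d : ℕ} (hm : #H.edgeFinset = m) {v : Fin k}
    (hd : H.degree v = d) (hd₁ : 1 ≤ d) :
    HasLearningGraphExponent H
      (2 - 2 / k - max (((k : ℝ) ^ 2 - 2 * (m + 1)) / (k * (k + 1) * (m + 1)))
        ((2 * (k : ℝ) - d - 3) / (k * (d + 1) * ((m : ℝ) - d + 2)))) := by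
  rcases max_choice (((k : ℝ) ^ 2 - 2 * (m + 1)) / (k * (k + 1) * (m + 1)))
    ((2 * (k : ℝ) - d - 3) / (k * (d + 1) * ((m : ℝ) - d + 2))) with h | h <;> rw [h]
  exacts [hasLearningGraphExponent_of_card_edges v.pos hm,
    hasLearningGraphExponent_of_degree hm hd hd₁]

end Algorithms

/-- **Main Theorem (Theorem 3) of the paper.** For a fixed graph `H` on `k ≥ 3` vertices with
`m` edges and minimum degree `d ≥ 1`, setting
`t = max{ (k²-2(m+1))/(k(k+1)(m+1)), (2k-d-3)/(k(d+1)(m-d+2)) }`,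
there is a learning graph for the subgraph-detection function `f_{H,n}` of complexity
`O(n^{2 - 2/k - t})`. -/
theorem subgraph_learningGraph_main (k m d : ℕ) (hk : 3 ≤ k)
    (H : SimpleGraph (Fin k)) [DecidableRel H.Adj]
    (hm : H.edgeFinset.card = m) (hd : H.minDegree = d) (hd1 : 1 ≤ d)
    (t : ℝ)
    (ht : t = max (((k : ℝ) ^ 2 - 2 * (m + 1)) / (k * (k + 1) * (m + 1)))
      ((2 * (k : ℝ) - d - 3) / (k * (d + 1) * ((m : ℝ) - d + 2)))) :
    ∃ c : ℝ, 0 < c ∧ ∀ n : ℕ, 1 ≤ n →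
      ∃ G : LearningGraph (Set.univ : Set (EdgeSlot n → Bool)) (subgraphFn H n),
        G.complexity ≤ c * (n : ℝ) ^ ((2 : ℝ) - 2 / k - t) := by
  have : NeZero k := ⟨by omega⟩
  obtain ⟨v, hv⟩ := H.exists_minimal_degree_vertex
  rw [ht]
  exact subgraph_learningGraph_main_general hm (hv.symm.trans hd) hd1
end

section
/- Let 𝒢 be a learning graph for a function f whose edge set ℰ is partitioned into K stages E₁, …, E_K, where the level of a vertex is its distance from the root and a stage is the set of all edges of 𝒢 going from vertices at level i to vertices at level j for some i < j, and where every flow p_y has total flow value 1 through each stage. For each stage define C₀(E_h) = Σ_{e∈E_h} ℓ(e)w(e), C₁(E_h) = max_y Σ_{e∈E_h} ℓ(e)p_y(e)²/w(e), and C(E_h) = √(C₀(E_h)C₁(E_h)). Then there exists a positive weight function w′ on ℰ such that the complexity of 𝒢 with weights w′ satisfies C^{w′}(𝒢) ≤ K·(C(E₁) + … + C(E_K)). -/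
namespace LearningGraph

variable {ι : Type} [Fintype ι] [DecidableEq ι] {D : Set (ι → Bool)}
  {f : (ι → Bool) → Bool}

/-- The negative complexity with respect to an alternative weight function. -/
noncomputable def C0With (G : LearningGraph D f) (w' : G.V × G.V → ℝ) : ℝ :=
  ∑ e ∈ G.E, (G.len e : ℝ) * w' e

/-- The positive complexity with respect to an alternative weight function. -/
noncomputable def C1With (G : LearningGraph D f) (w' : G.V × G.V → ℝ) : ℝ :=
  ⨆ y : {y : ι → Bool // y ∈ D ∧ f y = true},
    ∑ e ∈ G.E, (G.len e : ℝ) * (G.p y.1 e) ^ 2 / w' e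

/-- The complexity with respect to an alternative weight function. -/
noncomputable def complexityWith (G : LearningGraph D f) (w' : G.V × G.V → ℝ) : ℝ :=
  Real.sqrt (G.C0With w' * G.C1With w')

/-- `G.walkTo t v` : there is a directed walk of length exactly `t` from the root to `v`. -/
def walkTo (G : LearningGraph D f) : ℕ → G.V → Prop
  | 0, v => v = G.root
  | (t + 1), v => ∃ u : G.V, G.walkTo t u ∧ (u, v) ∈ G.E

end LearningGraph

/-!
Multiplying the weights of a stage by a constant `c` multiplies its `C₀` by `c` and divides its `C₁`
by `c`, so with `c = √(C₁ / C₀)` both become the complexity `√(C₀ * C₁)` of the stage. Since `C₀` is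
additive and `C₁` subadditive over the stages, rebalancing every stage would bound the complexity of
the graph by the sum `T` of the stage complexities. A stage with `C₁ = 0 < C₀` would need `c = 0`;
there a small `c > 0` is used instead. Asking only that each rescaled `C₀` is at most `T` gives
`C₀ ≤ K * T` and `C₁ ≤ T` for the graph, hence the complexity bound `√K * T`.
-/

lemma exists_pos_mul_le_and_div_le_sqrt {a b t : ℝ} (ha : 0 ≤ a) (hb : 0 ≤ b)
    (hab : a = 0 → b = 0) (ht : 0 < t) (habt : √(a * b) ≤ t) :
    ∃ c : ℝ, 0 < c ∧ c * a ≤ t ∧ b / c ≤ √(a * b) := by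
  rcases hb.eq_or_lt with rfl | hb
  · refine ⟨t / (a + 1), by positivity, ?_, by simp⟩
    rw [div_mul_eq_mul_div, div_le_iff₀ (by positivity)]
    gcongr
    linarith
  · have ha : 0 < a := ha.lt_of_ne' fun h => hb.ne' (hab h)
    refine ⟨√b / √a, by positivity, ?_, ?_⟩
    · calc √b / √a * a = a / √a * √b := by ring
        _ = √(a * b) := by rw [Real.div_sqrt, Real.sqrt_mul ha.le]
        _ ≤ t := habt
    · apply le_of_eq
      calc b / (√b / √a) = √a * (b / √b) := by rw [div_div_eq_mul_div]; ring
        _ = √(a * b) := by rw [Real.div_sqrt, Real.sqrt_mul ha.le]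

lemma exists_eqOn_of_pairwise_disjoint {κ α β : Type*} [Nonempty β] {s : κ → Set α}
    (hs : Pairwise (Function.onFun Disjoint s)) (g : κ → α → β) :
    ∃ u : α → β, ∀ i, Set.EqOn u (g i) (s i) := by
  have hpoint : ∀ a, ∃ b, ∀ i, a ∈ s i → b = g i a := by
    intro a
    by_cases ha : ∃ i, a ∈ s i
    · obtain ⟨i, hi⟩ := ha
      refine ⟨g i a, fun j hj => ?_⟩
      rw [hs.eq (Set.not_disjoint_iff.2 ⟨a, hi, hj⟩)]
    · exact ⟨Classical.arbitrary β, fun i hi => (ha ⟨i, hi⟩).elim⟩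
  choose u hu using hpoint
  exact ⟨u, fun i a hi => hu a i hi⟩

namespace LearningGraph

variable {ι : Type} [Fintype ι] [DecidableEq ι] {D : Set (ι → Bool)}
  {f : (ι → Bool) → Bool}

/-- The negative complexity of a set of edges with respect to the weights `w`: the paper's `C₀(E_h)`
when `s` is the stage `E_h`. -/
noncomputable def C0On (G : LearningGraph D f) (s : Finset (G.V × G.V)) (w : G.V × G.V → ℝ) : ℝ :=
  ∑ e ∈ s, (G.len e : ℝ) * w e

/-- The positive complexity of a set of edges with respect to the weights `w`: the paper's
`C₁(E_h)` when `s` is the stage `E_h`. It is `0` when `f` has no 1-input in `D`. -/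
noncomputable def C1On (G : LearningGraph D f) (s : Finset (G.V × G.V)) (w : G.V × G.V → ℝ) : ℝ :=
  ⨆ y : {y : ι → Bool // y ∈ D ∧ f y = true}, ∑ e ∈ s, (G.len e : ℝ) * (G.p y.1 e) ^ 2 / w e

/-- The complexity of a set of edges with respect to the weights `w`: the paper's `C(E_h)` when `s`
is the stage `E_h`. -/
noncomputable def complexityOn (G : LearningGraph D f) (s : Finset (G.V × G.V))
    (w : G.V × G.V → ℝ) : ℝ :=
  √(G.C0On s w * G.C1On s w)

variable {G : LearningGraph D f} {s : Finset (G.V × G.V)} {w w' : G.V × G.V → ℝ}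

lemma C0On_nonneg (hw : ∀ e ∈ s, 0 ≤ w e) : 0 ≤ G.C0On s w :=
  Finset.sum_nonneg fun e he => mul_nonneg (Nat.cast_nonneg _) (hw e he)

lemma C1On_nonneg (hw : ∀ e ∈ s, 0 ≤ w e) : 0 ≤ G.C1On s w :=
  Real.iSup_nonneg fun _ => Finset.sum_nonneg fun e he =>
    div_nonneg (mul_nonneg (Nat.cast_nonneg _) (sq_nonneg _)) (hw e he)

lemma sum_le_C1On (y : {y : ι → Bool // y ∈ D ∧ f y = true}) :
    ∑ e ∈ s, (G.len e : ℝ) * (G.p y.1 e) ^ 2 / w e ≤ G.C1On s w :=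
  le_ciSup (f := fun y : {y : ι → Bool // y ∈ D ∧ f y = true} =>
    ∑ e ∈ s, (G.len e : ℝ) * (G.p y.1 e) ^ 2 / w e) (Set.finite_range _).bddAbove y

lemma C1On_eq_zero_of_C0On_eq_zero (hw : ∀ e ∈ s, 0 < w e) (h0 : G.C0On s w = 0) :
    G.C1On s w = 0 := by
  have hterm : ∀ e ∈ s, (G.len e : ℝ) * w e = 0 :=
    (Finset.sum_eq_zero_iff_of_nonneg fun e he =>
      mul_nonneg (Nat.cast_nonneg _) (hw e he).le).1 h0
  have hlen : ∀ e ∈ s, (G.len e : ℝ) = 0 := fun e he =>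
    (mul_eq_zero.1 (hterm e he)).resolve_right (hw e he).ne'
  have hsum : ∀ y : {y : ι → Bool // y ∈ D ∧ f y = true},
      ∑ e ∈ s, (G.len e : ℝ) * (G.p y.1 e) ^ 2 / w e = 0 := fun y =>
    Finset.sum_eq_zero fun e he => by rw [hlen e he, zero_mul, zero_div]
  simp only [C1On, hsum, Real.iSup_const_zero]

lemma C0On_congr (h : Set.EqOn w w' s) : G.C0On s w = G.C0On s w' :=
  Finset.sum_congr rfl fun e he => by rw [h he]

lemma C1On_congr (h : Set.EqOn w w' s) : G.C1On s w = G.C1On s w' :=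
  iSup_congr fun _ => Finset.sum_congr rfl fun e he => by rw [h he]

lemma C0On_smul (c : ℝ) : G.C0On s (c • w) = c * G.C0On s w := by
  simp only [C0On, Finset.mul_sum, Pi.smul_apply, smul_eq_mul, mul_left_comm]

lemma C1On_smul {c : ℝ} (hc : 0 ≤ c) : G.C1On s (c • w) = G.C1On s w / c := by
  rw [C1On, C1On, div_eq_mul_inv, Real.iSup_mul_of_nonneg (inv_nonneg.2 hc)]
  simp only [← div_eq_mul_inv, Finset.sum_div, div_div, Pi.smul_apply, smul_eq_mul, mul_comm c]

lemma exists_pos_C0On_smul_le_and_C1On_smul_le (hw : ∀ e ∈ s, 0 < w e) {t : ℝ} (ht : 0 < t)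
    (hst : G.complexityOn s w ≤ t) :
    ∃ c : ℝ, 0 < c ∧ G.C0On s (c • w) ≤ t ∧ G.C1On s (c • w) ≤ G.complexityOn s w := by
  have hw0 : ∀ e ∈ s, 0 ≤ w e := fun e he => (hw e he).le
  obtain ⟨c, hc, hC0, hC1⟩ := exists_pos_mul_le_and_div_le_sqrt (C0On_nonneg hw0)
    (C1On_nonneg hw0) (C1On_eq_zero_of_C0On_eq_zero hw) ht hst
  exact ⟨c, hc, (C0On_smul c).trans_le hC0, (C1On_smul hc.le).trans_le hC1⟩

section Stages

variable {κ : Type*} [Fintype κ] {stage : κ → Finset (G.V × G.V)}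

lemma C0On_biUnion (hdisj : Pairwise (Function.onFun Disjoint stage)) :
    G.C0On (Finset.univ.biUnion stage) w = ∑ h, G.C0On (stage h) w :=
  Finset.sum_biUnion (hdisj.set_pairwise _)

lemma C1On_biUnion_le (hdisj : Pairwise (Function.onFun Disjoint stage))
    (hw : ∀ h, ∀ e ∈ stage h, 0 ≤ w e) :
    G.C1On (Finset.univ.biUnion stage) w ≤ ∑ h, G.C1On (stage h) w := by
  refine Real.iSup_le (fun y => ?_) (Finset.sum_nonneg fun h _ => C1On_nonneg (hw h))
  rw [Finset.sum_biUnion (hdisj.set_pairwise _)]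
  exact Finset.sum_le_sum fun h _ => sum_le_C1On y

lemma exists_weights_C0On_le_and_C1On_le (hdisj : Pairwise (Function.onFun Disjoint stage))
    (hw : ∀ h, ∀ e ∈ stage h, 0 < w e) {t : κ → ℝ} (ht : ∀ h, 0 < t h)
    (hst : ∀ h, G.complexityOn (stage h) w ≤ t h) :
    ∃ w' : G.V × G.V → ℝ, (∀ e ∈ Finset.univ.biUnion stage, 0 < w' e) ∧
      G.C0On (Finset.univ.biUnion stage) w' ≤ ∑ h, t h ∧
      G.C1On (Finset.univ.biUnion stage) w' ≤ ∑ h, G.complexityOn (stage h) w := by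
  choose c hc hC0 hC1 using fun h =>
    exists_pos_C0On_smul_le_and_C1On_smul_le (hw h) (ht h) (hst h)
  obtain ⟨w', hw'⟩ := exists_eqOn_of_pairwise_disjoint
    (s := fun h => (stage h : Set (G.V × G.V)))
    (fun _ _ hne => Finset.disjoint_coe.2 (hdisj hne)) fun h => c h • w
  have hpos : ∀ h, ∀ e ∈ stage h, 0 < w' e := fun h e he =>
    (mul_pos (hc h) (hw h e he)).trans_eq (hw' h he).symm
  refine ⟨w', fun e he => ?_, ?_, ?_⟩
  · obtain ⟨h, -, he⟩ := Finset.mem_biUnion.1 he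
    exact hpos h e he
  · rw [C0On_biUnion hdisj]
    exact Finset.sum_le_sum fun h _ => (C0On_congr (hw' h)).trans_le (hC0 h)
  · exact (C1On_biUnion_le hdisj fun h e he => (hpos h e he).le).trans <|
      Finset.sum_le_sum fun h _ => (C1On_congr (hw' h)).trans_le (hC1 h)

end Stages

end LearningGraph

open LearningGraph in
theorem learningGraph_stages_general {ι : Type} [Fintype ι] [DecidableEq ι]
    {D : Set (ι → Bool)} {f : (ι → Bool) → Bool} (G : LearningGraph D f)
    {κ : Type*} [Fintype κ] (stage : κ → Finset (G.V × G.V))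
    (hdisj : Pairwise (Function.onFun Disjoint stage))
    (hunion : Finset.univ.biUnion stage = G.E) :
    ∃ w' : G.V × G.V → ℝ, (∀ e ∈ G.E, 0 < w' e) ∧
      G.complexityWith w' ≤ √(Fintype.card κ) * ∑ h, G.complexityOn (stage h) G.w := by
  set T := ∑ h, G.complexityOn (stage h) G.w
  have hle : ∀ h, G.complexityOn (stage h) G.w ≤ T := fun h =>
    Finset.single_le_sum (f := fun h => G.complexityOn (stage h) G.w)
      (fun _ _ => Real.sqrt_nonneg _) (Finset.mem_univ h)
  have hT : 0 ≤ T := Finset.sum_nonneg fun _ _ => Real.sqrt_nonneg _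
  -- The cap on the rescaled `C₀` must be positive; if `T = 0`, any cap will do because `C₁ ≤ 0`.
  obtain ⟨t, ht, hTt, htT⟩ : ∃ t, 0 < t ∧ T ≤ t ∧ t * T = T * T := by
    rcases hT.eq_or_lt with h0 | hpos
    · exact ⟨1, one_pos, by linarith, by simp [← h0]⟩
    · exact ⟨T, hpos, le_rfl, rfl⟩
  have hw : ∀ h, ∀ e ∈ stage h, 0 < G.w e := fun h e he =>
    G.w_pos e (hunion ▸ Finset.mem_biUnion.2 ⟨h, Finset.mem_univ h, he⟩)
  obtain ⟨w', hpos, hC0, hC1⟩ := exists_weights_C0On_le_and_C1On_le hdisj hw (fun _ => ht)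
    fun h => (hle h).trans hTt
  rw [hunion] at hpos hC0 hC1
  refine ⟨w', hpos, ?_⟩
  calc G.complexityWith w' = √(G.C0On G.E w' * G.C1On G.E w') := rfl
    _ ≤ √((∑ _h : κ, t) * T) := Real.sqrt_le_sqrt <|
        mul_le_mul hC0 hC1 (C1On_nonneg fun e he => (hpos e he).le)
          (Finset.sum_nonneg fun _ _ => ht.le)
    _ = √(Fintype.card κ * (T * T)) := by
        rw [Finset.sum_const, Finset.card_univ, nsmul_eq_mul, mul_assoc, htT]
    _ = √(Fintype.card κ) * T := by
        rw [Real.sqrt_mul (Nat.cast_nonneg _), Real.sqrt_mul_self hT]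

open LearningGraph in
/-- **Lemma 6 of the paper (Belovs).** If the edge set of a learning graph is partitioned into
`K` stages (sets of edges going from one level to a deeper level, where the level of a vertex
is its distance from the root), and every flow has total value 1 through each stage, then the
weights can be modified so that the complexity of the learning graph is bounded by (a constant
`K` times) the sum of the complexities of the stages. -/
theorem learningGraph_stages {ι : Type} [Fintype ι] [DecidableEq ι]
    {D : Set (ι → Bool)} {f : (ι → Bool) → Bool}
    (G : LearningGraph D f) (K : ℕ) (hK : 0 < K)
    (stage : Fin K → Finset (G.V × G.V))
    -- the level function: `lev v` is the distance from the root to `v`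
    (lev : G.V → ℕ)
    (hlev : ∀ v : G.V, G.walkTo (lev v) v ∧ ∀ t : ℕ, G.walkTo t v → lev v ≤ t)
    -- each stage is the set of all edges from level `i` to level `j` for some `i < j`
    (hstage : ∀ h : Fin K, ∃ i j : ℕ, i < j ∧
      stage h = G.E.filter (fun e => lev e.1 = i ∧ lev e.2 = j))
    -- the stages partition the edge set
    (hdisj : ∀ h h' : Fin K, h ≠ h' → Disjoint (stage h) (stage h'))
    (hunion : Finset.univ.biUnion stage = G.E)
    -- every flow has total value 1 through each stage (value of a flow over a set of
    -- edges: the flow leaving the sources of the set)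
    (hval : ∀ y ∈ D, f y = true → ∀ h : Fin K,
      ∑ e ∈ (stage h).filter (fun e => ∀ e' ∈ stage h, e'.2 ≠ e.1), G.p y e = 1) :
    ∃ w' : G.V × G.V → ℝ, (∀ e ∈ G.E, 0 < w' e) ∧
      G.complexityWith w' ≤ K * ∑ h : Fin K,
        Real.sqrt ((∑ e ∈ stage h, (G.len e : ℝ) * G.w e) *
          (⨆ y : {y : ι → Bool // y ∈ D ∧ f y = true},
            ∑ e ∈ stage h, (G.len e : ℝ) * (G.p y.1 e) ^ 2 / G.w e)) := by
  obtain ⟨w', hpos, hle⟩ := learningGraph_stages_general G stage (fun h h' => hdisj h h') hunion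
  have hsqrt : √(Fintype.card (Fin K) : ℝ) ≤ K := by
    rw [Fintype.card_fin, Real.sqrt_le_self_iff]
    exact Or.inr (Nat.one_le_cast.2 hK)
  exact ⟨w', hpos, hle.trans <|
    mul_le_mul_of_nonneg_right hsqrt (Finset.sum_nonneg fun _ _ => Real.sqrt_nonneg _)⟩
end

section
/- Let E be a finite set partitioned into nonempty subsets E₁, …, E_s, let ℓ : E → ℝ_{≥0}, let w : E → ℝ_{>0}, let Y be a nonempty finite set, and for each y ∈ Y let p_y : E → ℝ_{≥0}. Suppose there are reals α₁, …, α_s > 0 with Σ_i α_i = 1 (representing the flow value through E_i, the same for every y). For each i define C₀(E_i) = Σ_{e∈E_i} ℓ(e)w(e) and C₁(E_i) = max_{y∈Y} Σ_{e∈E_i} ℓ(e)p_y(e)²/(w(e)α_i²), and assume C₁(E_i) > 0. Define w′(e) = α_i · C₁(E_i) · w(e) for e ∈ E_i. Then (Σ_{e∈E} ℓ(e)w′(e)) · (max_{y∈Y} Σ_{e∈E} ℓ(e)p_y(e)²/w′(e)) ≤ max_i C₀(E_i)·C₁(E_i). -/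
/-!
Scaling the weights of a part by `c` multiplies its negative complexity by `c` and divides its
positive complexity by `c`. The factor `αᵢ C₁(Eᵢ)` therefore makes the negative complexity of the
stage the average of the products `C₀(Eᵢ) C₁(Eᵢ)` with coefficients `αᵢ`, hence at most their
maximum, while the positive complexity of each part becomes at most `αᵢ`, hence at most `1` in
total.
-/

open Finset Function

lemma sum_mul_le_iSup {ι : Type*} [Fintype ι] {a f : ι → ℝ} (ha : ∀ i, 0 ≤ a i)
    (hasum : ∑ i, a i = 1) : ∑ i, a i * f i ≤ ⨆ i, f i :=
  (convex_Iic (⨆ i, f i)).sum_mem (fun i _ => ha i) hasum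
    fun i _ => le_ciSup (Set.finite_range f).bddAbove i

section Complexity

variable {β : Type*}

/-- The negative complexity `C₀(S)` of a set `S` of edges with lengths `ℓ` and weights `w`. -/
def negativeComplexity (ℓ w : β → ℝ) (S : Finset β) : ℝ :=
  ∑ e ∈ S, ℓ e * w e

/-- The positive complexity of a set `S` of edges with lengths `ℓ` and weights `w` under a single
flow `q`, not normalized by its value through `S`. Dividing `q` by a value `a` has the same effect
as multiplying the weights by `a ^ 2`, so `C₁(S)` is the maximum over the flows of the positive
complexity with weights `w e * a ^ 2`. -/
noncomputable def positiveComplexity (ℓ w q : β → ℝ) (S : Finset β) : ℝ :=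
  ∑ e ∈ S, ℓ e * q e ^ 2 / w e

variable {ℓ w w' q : β → ℝ} {S : Finset β}

lemma negativeComplexity_nonneg (hℓ : ∀ e ∈ S, 0 ≤ ℓ e) (hw : ∀ e ∈ S, 0 ≤ w e) :
    0 ≤ negativeComplexity ℓ w S :=
  sum_nonneg fun e he => mul_nonneg (hℓ e he) (hw e he)

lemma negativeComplexity_eq_mul {c : ℝ} (hw' : ∀ e ∈ S, w' e = c * w e) :
    negativeComplexity ℓ w' S = c * negativeComplexity ℓ w S := by
  unfold negativeComplexity
  rw [mul_sum]
  exact sum_congr rfl fun e he => by rw [hw' e he, mul_left_comm]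

lemma positiveComplexity_eq_div {c : ℝ} (hw' : ∀ e ∈ S, w' e = c * w e) :
    positiveComplexity ℓ w' q S = positiveComplexity ℓ w q S / c := by
  unfold positiveComplexity
  rw [sum_div]
  exact sum_congr rfl fun e he => by rw [hw' e he, div_mul_eq_div_div_swap]

lemma positiveComplexity_le_of_reweight {a C : ℝ} (ha : 0 < a) (hC : 0 < C)
    (hqC : positiveComplexity ℓ (fun e => w e * a ^ 2) q S ≤ C)
    (hw' : ∀ e ∈ S, w' e = a * C * w e) :
    positiveComplexity ℓ w' q S ≤ a := by
  have hscale : ∀ e ∈ S, w' e = C / a * (w e * a ^ 2) := fun e he => by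
    rw [hw' e he]
    field_simp
  calc positiveComplexity ℓ w' q S
      = positiveComplexity ℓ (fun e => w e * a ^ 2) q S / (C / a) :=
        positiveComplexity_eq_div hscale
    _ ≤ C / (C / a) := by gcongr
    _ = a := div_div_cancel₀ hC.ne'

end Complexity

section Partition

variable {ι β : Type*} [Fintype ι] [DecidableEq β] {Ep : ι → Finset β} {ℓ w w' q : β → ℝ}
  {a C : ι → ℝ}

lemma negativeComplexity_biUnion_le_iSup (hdisj : Pairwise (Disjoint on Ep))
    (ha : ∀ i, 0 ≤ a i) (hasum : ∑ i, a i = 1)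
    (hw' : ∀ i, ∀ e ∈ Ep i, w' e = a i * C i * w e) :
    negativeComplexity ℓ w' (univ.biUnion Ep) ≤ ⨆ i, negativeComplexity ℓ w (Ep i) * C i := by
  calc negativeComplexity ℓ w' (univ.biUnion Ep)
      = ∑ i, negativeComplexity ℓ w' (Ep i) := sum_biUnion (hdisj.set_pairwise _)
    _ = ∑ i, a i * (negativeComplexity ℓ w (Ep i) * C i) :=
        sum_congr rfl fun i _ => by
          rw [negativeComplexity_eq_mul (hw' i), mul_assoc, mul_comm (C i)]
    _ ≤ ⨆ i, negativeComplexity ℓ w (Ep i) * C i :=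
        sum_mul_le_iSup ha hasum

lemma positiveComplexity_biUnion_le_sum (hdisj : Pairwise (Disjoint on Ep))
    (ha : ∀ i, 0 < a i) (hC : ∀ i, 0 < C i)
    (hqC : ∀ i, positiveComplexity ℓ (fun e => w e * a i ^ 2) q (Ep i) ≤ C i)
    (hw' : ∀ i, ∀ e ∈ Ep i, w' e = a i * C i * w e) :
    positiveComplexity ℓ w' q (univ.biUnion Ep) ≤ ∑ i, a i := by
  calc positiveComplexity ℓ w' q (univ.biUnion Ep)
      = ∑ i, positiveComplexity ℓ w' q (Ep i) := sum_biUnion (hdisj.set_pairwise _)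
    _ ≤ ∑ i, a i :=
        sum_le_sum fun i _ => positiveComplexity_le_of_reweight (ha i) (hC i) (hqC i) (hw' i)

theorem reweighting_lemma_general {Y : Type*} [Nonempty Y] {p : Y → β → ℝ}
    (hdisj : Pairwise (Disjoint on Ep))
    (hℓ : ∀ e ∈ univ.biUnion Ep, 0 ≤ ℓ e) (hw : ∀ e ∈ univ.biUnion Ep, 0 < w e)
    (ha : ∀ i, 0 < a i) (hasum : ∑ i, a i = 1) (hC : ∀ i, 0 < C i)
    (hpC : ∀ i y, positiveComplexity ℓ (fun e => w e * a i ^ 2) (p y) (Ep i) ≤ C i)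
    (hw' : ∀ i, ∀ e ∈ Ep i, w' e = a i * C i * w e) :
    negativeComplexity ℓ w' (univ.biUnion Ep) *
        (⨆ y, positiveComplexity ℓ w' (p y) (univ.biUnion Ep)) ≤
      ⨆ i, negativeComplexity ℓ w (Ep i) * C i := by
  have hw'_nonneg : ∀ e ∈ univ.biUnion Ep, 0 ≤ w' e := fun e he => by
    obtain ⟨i, -, hei⟩ := mem_biUnion.mp he
    rw [hw' i e hei]
    exact mul_nonneg (mul_pos (ha i) (hC i)).le (hw e he).le
  have hpos : ⨆ y, positiveComplexity ℓ w' (p y) (univ.biUnion Ep) ≤ 1 :=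
    ciSup_le fun y =>
      (positiveComplexity_biUnion_le_sum hdisj ha hC (fun i => hpC i y) hw').trans_eq hasum
  exact (mul_le_of_le_one_right (negativeComplexity_nonneg hℓ hw'_nonneg) hpos).trans
    (negativeComplexity_biUnion_le_iSup hdisj (fun i => (ha i).le) hasum hw')

end Partition

/-- **Lemma 8 of the paper (reweighting lemma), analytic form.** Let `E` be partitioned into
nonempty parts `Ep 1, …, Ep s`, with lengths `ℓ ≥ 0`, weights `w > 0`, flows `p y ≥ 0`, and
common flow values `a i > 0` through the parts summing to `1`. With
`C₀(Eᵢ) = Σ_{e∈Eᵢ} ℓ(e)w(e)`, `C₁(Eᵢ) = max_y Σ_{e∈Eᵢ} ℓ(e)p_y(e)²/(w(e)αᵢ²)` assumed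
positive, and new weights `w'(e) = αᵢ·C₁(Eᵢ)·w(e)` on `Eᵢ`, the squared complexity of `E`
under `w'` is at most `max_i C₀(Eᵢ)·C₁(Eᵢ)`. -/
theorem reweighting_lemma {β : Type} [DecidableEq β]
    (E : Finset β) (s : ℕ) (hs : 0 < s)
    (Ep : Fin s → Finset β) (hne : ∀ i, (Ep i).Nonempty)
    (hdisj : ∀ i j : Fin s, i ≠ j → Disjoint (Ep i) (Ep j))
    (hunion : Finset.univ.biUnion Ep = E)
    (ℓ : β → ℝ) (hℓ : ∀ e ∈ E, 0 ≤ ℓ e)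
    (w : β → ℝ) (hw : ∀ e ∈ E, 0 < w e)
    {Y : Type} [Fintype Y] [Nonempty Y]
    (p : Y → β → ℝ) (hp : ∀ y : Y, ∀ e ∈ E, 0 ≤ p y e)
    (a : Fin s → ℝ) (ha : ∀ i, 0 < a i) (hasum : ∑ i, a i = 1)
    (C1 : Fin s → ℝ)
    (hC1 : ∀ i, C1 i = ⨆ y : Y, ∑ e ∈ Ep i, ℓ e * (p y e) ^ 2 / (w e * (a i) ^ 2))
    (hC1pos : ∀ i, 0 < C1 i)
    (w' : β → ℝ) (hw' : ∀ i, ∀ e ∈ Ep i, w' e = a i * C1 i * w e) :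
    (∑ e ∈ E, ℓ e * w' e) * (⨆ y : Y, ∑ e ∈ E, ℓ e * (p y e) ^ 2 / w' e) ≤
      ⨆ i : Fin s, (∑ e ∈ Ep i, ℓ e * w e) * C1 i := by
  subst hunion
  exact reweighting_lemma_general hdisj hℓ hw ha hasum hC1pos
    (fun i y => (le_ciSup (Set.finite_range _).bddAbove y).trans_eq (hC1 i).symm) hw'
end

section
/- Let 𝒱 be a finite set equipped with an action of the symmetric group S_n, let ℰ ⊆ 𝒱×𝒱 be invariant under the diagonal action (i.e., (u,v) ∈ ℰ implies (σ(u),σ(v)) ∈ ℰ for every σ ∈ S_n), let Y be a nonempty set, and for each y ∈ Y let p_y : ℰ → ℝ. Suppose S_n acts transitively on the flows, i.e., for every y, y′ ∈ Y there exists τ ∈ S_n with p_y((u,v)) = p_{y′}((τ(u),τ(v))) for all (u,v) ∈ ℰ. Then for every u ∈ 𝒱, the quantity Σ_{v ∈ [u]} Σ_{w : (v,w)∈ℰ} p_y((v,w)) is independent of y ∈ Y, and likewise Σ_{v ∈ [u]} Σ_{w : (w,v)∈ℰ} p_y((w,v)) is independent of y ∈ Y, where [u] = {σ(u) : σ ∈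 S_n} denotes the orbit of u. -/
/-!
A group element carrying one flow to another permutes the edge set, which is finite and invariant,
and maps every orbit to itself. It therefore reindexes the sum of the first flow over the edges at
an orbit as the corresponding sum of the second flow.
-/

theorem sum_comp_eq_sum_of_mapsTo_of_injOn {α M : Type*} [AddCommMonoid M] {s : Finset α}
    {φ : α → α} (hmaps : Set.MapsTo φ s s) (hinj : Set.InjOn φ s) (f : α → M) :
    ∑ a ∈ s, f (φ a) = ∑ a ∈ s, f a :=
  Finset.sum_nbij φ hmaps hinj
    (Finset.surjOn_of_injOn_of_card_le φ hmaps hinj le_rfl) fun _ _ ↦ rfl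

section MulAction

variable {G α β M : Type*} [Group G] [MulAction G α] [MulAction G β] [AddCommMonoid M]

theorem smul_mem_orbit_iff (g : G) {a b : α} :
    g • a ∈ MulAction.orbit G b ↔ a ∈ MulAction.orbit G b := by
  rw [← MulAction.orbit_eq_iff, ← MulAction.orbit_eq_iff, MulAction.orbit_smul]

open Classical in
theorem sum_ite_mem_orbit_eq_of_eq_smul (π : α →[G] β) (b : β) {s : Finset α} {g : G}
    (hs : ∀ a ∈ s, g • a ∈ s) {f f' : α → M} (hf : ∀ a ∈ s, f a = f' (g • a)) :
    (∑ a ∈ s, if π a ∈ MulAction.orbit G b then f a else 0) =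
      ∑ a ∈ s, if π a ∈ MulAction.orbit G b then f' a else 0 :=
  calc
    (∑ a ∈ s, if π a ∈ MulAction.orbit G b then f a else 0)
    _ = ∑ a ∈ s, if π (g • a) ∈ MulAction.orbit G b then f' (g • a) else 0 :=
      Finset.sum_congr rfl fun a ha ↦ by simp only [map_smul, smul_mem_orbit_iff, hf a ha]
    _ = ∑ a ∈ s, if π a ∈ MulAction.orbit G b then f' a else 0 :=
      sum_comp_eq_sum_of_mapsTo_of_injOn hs (MulAction.injective g).injOn
        fun a ↦ if π a ∈ MulAction.orbit G b then f' a else 0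

end MulAction

open Classical in
theorem transitive_flows_consistent_general {G V Y M : Type*} [Group G] [MulAction G V]
    [AddCommMonoid M] (E : Finset (V × V)) (hE : ∀ e ∈ E, ∀ g : G, g • e ∈ E)
    (p : Y → V × V → M) (htrans : ∀ y y' : Y, ∃ g : G, ∀ e ∈ E, p y e = p y' (g • e))
    (u : V) (y y' : Y) :
    (∑ e ∈ E, if e.1 ∈ MulAction.orbit G u then p y e else 0) =
        (∑ e ∈ E, if e.1 ∈ MulAction.orbit G u then p y' e else 0) ∧
      (∑ e ∈ E, if e.2 ∈ MulAction.orbit G u then p y e else 0) =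
        (∑ e ∈ E, if e.2 ∈ MulAction.orbit G u then p y' e else 0) := by
  obtain ⟨g, hg⟩ := htrans y y'
  have hgE : ∀ e ∈ E, g • e ∈ E := fun e he ↦ hE e he g
  exact ⟨sum_ite_mem_orbit_eq_of_eq_smul (MulActionHom.fst G V V) u hgE hg,
    sum_ite_mem_orbit_eq_of_eq_smul (MulActionHom.snd G V V) u hgE hg⟩

open Classical in
/-- **Lemma 11 of the paper (transitive flows are consistent with orbits).** If the symmetric
group `S_n` acts on the vertex set `V`, the edge set `E` is invariant under the diagonal
action, and `S_n` acts transitively on the flows `p y`, then for every vertex `u`, the total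
flow on the edges leaving (respectively entering) the orbit `[u]` is independent of `y`. -/
theorem transitive_flows_consistent {n : ℕ} {V : Type} [Fintype V] [DecidableEq V]
    [MulAction (Equiv.Perm (Fin n)) V]
    (E : Finset (V × V))
    (hEinv : ∀ e ∈ E, ∀ σ : Equiv.Perm (Fin n), (σ • e.1, σ • e.2) ∈ E)
    {Y : Type} [Nonempty Y] (p : Y → V × V → ℝ)
    (htrans : ∀ y y' : Y, ∃ τ : Equiv.Perm (Fin n),
      ∀ e ∈ E, p y e = p y' (τ • e.1, τ • e.2)) :
    ∀ u : V, ∀ y y' : Y,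
      (∑ e ∈ E, if e.1 ∈ MulAction.orbit (Equiv.Perm (Fin n)) u then p y e else 0) =
        (∑ e ∈ E, if e.1 ∈ MulAction.orbit (Equiv.Perm (Fin n)) u then p y' e else 0) ∧
      (∑ e ∈ E, if e.2 ∈ MulAction.orbit (Equiv.Perm (Fin n)) u then p y e else 0) =
        (∑ e ∈ E, if e.2 ∈ MulAction.orbit (Equiv.Perm (Fin n)) u then p y' e else 0) :=
  transitive_flows_consistent_general E hEinv p htrans
end
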